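/- arXiv:1711.03950 — 4 statements merged into one kernel-verified Lean document; each statement's English description precedes it below -/
import Mathlib

section
/- Let Θ ⊂ ℝ be a finite set with Θ = −Θ and 0 ∈ Θ, and suppose the Diophantine condition holds: there exist c > 0 and P₀ > 0 such that for every natural number m ≥ 1 and every θ ∈ Θ_m \ {0} one has |θ| ≥ c·m^{-P₀}, where Θ_m is the m-fold sumset of Θ. Let N ≥ 1 be a natural number and P > 24·N·P₀. Then there exists ε₁ ∈ (0,1) such that for every ε ∈ (0, ε₁), setting L̃ := ⌈ε^{-2N/P}⌉, the 'wide' resonance zones R'(θ) := (−θ − (5/2)ε^{1/2}/|θ|, −θ + (5/2)ε^{1/2}/|θ|), θ ∈ Θ_{3N·L̃} \ {0}, are pairwise disjoint: for distinct θ₁, θ₂ ∈ Θ_{3N·L̃} \ {0}, R'(θ₁) ∩ R'(θ₂) = ∅. -/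
open Pointwise

/-- The `m`-fold sumset `Θ_m = Θ + Θ + ⋯ + Θ` (m copies), with `Θ_0 = {0}`. -/
noncomputable def sumset (Θ : Finset ℝ) : ℕ → Finset ℝ
  | 0 => {0}
  | (L + 1) => Θ + sumset Θ L

/-! Put `s = c (2M)^{-P₀}` with `M = 3N L̃`. Elements of `Θ_M \ {0}` are at least `s` in size, and
so are the differences of two distinct ones, because `Θ_M - Θ_M ⊆ Θ_{2M}` for symmetric `Θ`. A zone
of half-width `w / |θ|` then has half-width at most `w / s`, so the zones are disjoint once
`2 w ≤ s ^ 2`. Since `s ^ 2` is at least a constant times `ε ^ (4 N P₀ / P)`, this inequality holds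
for `w = (5 / 2) √ε` and small `ε` as soon as `4 N P₀ / P < 1 / 2`. -/

open Filter Topology

theorem sumset_eq_nsmul (Θ : Finset ℝ) (m : ℕ) : sumset Θ m = m • Θ := by
  induction m with
  | zero => rw [sumset, zero_nsmul, Finset.singleton_zero]
  | succ m ih => rw [sumset, ih, succ_nsmul']

theorem mem_sumset_iff_mem_nsmul_coe {Θ : Finset ℝ} {m : ℕ} {θ : ℝ} :
    θ ∈ sumset Θ m ↔ θ ∈ m • (Θ : Set ℝ) := by
  rw [sumset_eq_nsmul, ← Finset.mem_coe, Finset.coe_nsmul]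

theorem sub_mem_add_nsmul {G : Type*} [SubtractionMonoid G] {s : Set G} (hs : ∀ x ∈ s, -x ∈ s)
    {m n : ℕ} {a b : G} (ha : a ∈ m • s) (hb : b ∈ n • s) : a - b ∈ (m + n) • s := by
  have neg_s : -s = s := Set.Subset.antisymm (fun x hx ↦ by simpa using hs _ hx) hs
  rw [add_nsmul, sub_eq_add_neg]
  refine Set.add_mem_add ha ?_
  rwa [← Set.mem_neg, ← neg_nsmul, neg_s]

theorem eventually_mul_rpow_le_mul_rpow {k p q : ℝ} (A : ℝ) (hk : 0 < k) (hqp : q < p) :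
    ∀ᶠ ε : ℝ in 𝓝[>] 0, A * ε ^ p ≤ k * ε ^ q := by
  have hlim : Tendsto (fun ε : ℝ ↦ A * ε ^ (p - q)) (𝓝[>] 0) (𝓝 0) := by
    have hcont := (Real.continuousAt_rpow_const 0 (p - q) (.inr (sub_pos.2 hqp).le)).tendsto
    rw [Real.zero_rpow (sub_pos.2 hqp).ne'] at hcont
    simpa using (hcont.mono_left nhdsWithin_le_nhds).const_mul A
  filter_upwards [hlim.eventually_le_const hk, self_mem_nhdsWithin] with ε hle hε
  calc A * ε ^ p = A * ε ^ (p - q) * ε ^ q := by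
        rw [mul_assoc, ← Real.rpow_add hε, sub_add_cancel]
    _ ≤ k * ε ^ q := mul_le_mul_of_nonneg_right hle (Real.rpow_nonneg hε.le q)

theorem rpow_mul_le_mul_natCeil_rpow_neg {C a p ε : ℝ} (hC : 0 < C) (ha : 0 ≤ a) (hp : 0 ≤ p)
    (hε : 0 < ε) (hε1 : ε ≤ 1) :
    (2 * C) ^ (-p) * ε ^ (a * p) ≤ (C * ⌈ε ^ (-a)⌉₊) ^ (-p) := by
  have one_le : 1 ≤ ε ^ (-a) :=
    Real.one_le_rpow_of_pos_of_le_one_of_nonpos hε hε1 (neg_nonpos.2 ha)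
  have ceil_le : (⌈ε ^ (-a)⌉₊ : ℝ) ≤ 2 * ε ^ (-a) := Nat.ceil_le_two_mul (by linarith)
  calc (2 * C) ^ (-p) * ε ^ (a * p) = (2 * C) ^ (-p) * (ε ^ (-a)) ^ (-p) := by
        rw [← Real.rpow_mul hε.le, neg_mul_neg]
    _ = (C * (2 * ε ^ (-a))) ^ (-p) := by
        rw [← Real.mul_rpow (by positivity) (by positivity)]
        ring_nf
    _ ≤ (C * ⌈ε ^ (-a)⌉₊) ^ (-p) :=
        Real.rpow_le_rpow_of_nonpos (by positivity) (by gcongr) (neg_nonpos.2 hp)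

theorem eventually_mul_sqrt_le_sq_mul_natCeil_rpow_neg {c C a p : ℝ} (A : ℝ) (hc : 0 < c)
    (hC : 0 < C) (ha : 0 ≤ a) (hp : 0 ≤ p) (hap : a * p < 1 / 4) :
    ∀ᶠ ε : ℝ in 𝓝[>] 0, A * √ε ≤ (c * (C * ⌈ε ^ (-a)⌉₊) ^ (-p)) ^ 2 := by
  have hk : 0 < (c * (2 * C) ^ (-p)) ^ 2 := by positivity
  filter_upwards [eventually_mul_rpow_le_mul_rpow A hk (show a * p * 2 < 1 / 2 by linarith),
    Ioc_mem_nhdsGT one_pos] with ε hle ⟨hε, hε1⟩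
  calc A * √ε = A * ε ^ (1 / 2 : ℝ) := by rw [Real.sqrt_eq_rpow]
    _ ≤ (c * (2 * C) ^ (-p)) ^ 2 * ε ^ (a * p * 2) := hle
    _ = (c * ((2 * C) ^ (-p) * ε ^ (a * p))) ^ 2 := by
        rw [Real.rpow_mul hε.le, Real.rpow_two]
        ring
    _ ≤ (c * (C * ⌈ε ^ (-a)⌉₊) ^ (-p)) ^ 2 := by
        gcongr
        exact rpow_mul_le_mul_natCeil_rpow_neg hC ha hp hε hε1

variable {E : Type*} [SeminormedAddCommGroup E]

/-- The resonance zone of the frequency `θ`, written as a ball so that it makes sense in any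
seminormed group. On the real line `w = √ε / 4` gives the zone `R(θ; ε^{1/2})` and
`w = (5 / 2) √ε` the wide zone `R'(θ)`. -/
def resonanceZone (w : ℝ) (θ : E) : Set E :=
  Metric.ball (-θ) (w / ‖θ‖)

theorem resonanceZone_eq_Ioo (w θ : ℝ) :
    resonanceZone w θ = Set.Ioo (-θ - w / |θ|) (-θ + w / |θ|) :=
  Real.ball_eq_Ioo _ _

theorem disjoint_resonanceZone {w s : ℝ} {θ₁ θ₂ : E} (hs : 0 < s) (hw : 2 * w ≤ s ^ 2)
    (h₁ : s ≤ ‖θ₁‖) (h₂ : s ≤ ‖θ₂‖) (h₁₂ : s ≤ ‖θ₁ - θ₂‖) :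
    Disjoint (resonanceZone w θ₁) (resonanceZone w θ₂) := by
  have radius_le {θ : E} (hθ : s ≤ ‖θ‖) : w / ‖θ‖ ≤ s / 2 := by
    rw [div_le_iff₀ (hs.trans_le hθ)]
    calc w ≤ s / 2 * s := by linarith
      _ ≤ s / 2 * ‖θ‖ := by gcongr
  apply Metric.ball_disjoint_ball
  rw [dist_neg_neg, dist_eq_norm]
  linarith [radius_le h₁, radius_le h₂]

/-- The Diophantine condition on a set of frequencies `Θ` with constant `c` and exponent `p`:
nonzero elements of the `m`-fold sumset `m • Θ` have norm at least `c * m ^ (-p)`. -/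
def IsDiophantine (Θ : Set E) (c p : ℝ) : Prop :=
  ∀ m : ℕ, 1 ≤ m → ∀ θ ∈ m • Θ, θ ≠ 0 → c * (m : ℝ) ^ (-p) ≤ ‖θ‖

namespace IsDiophantine

variable {Θ : Set E} {c p : ℝ}

theorem pairwiseDisjoint_resonanceZone (hΘ : IsDiophantine Θ c p) (hsym : ∀ x ∈ Θ, -x ∈ Θ)
    (hc : 0 < c) (hp : 0 ≤ p) {M : ℕ} (hM : 1 ≤ M) {w : ℝ}
    (hw : 2 * w ≤ (c * (2 * M : ℝ) ^ (-p)) ^ 2) :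
    (M • Θ \ {0}).PairwiseDisjoint (resonanceZone w) := by
  have M_pos : (0 : ℝ) < M := Nat.cast_pos.2 hM
  have le_norm {θ : E} (hθ : θ ∈ M • Θ \ {0}) : c * (2 * M : ℝ) ^ (-p) ≤ ‖θ‖ := calc
    c * (2 * M : ℝ) ^ (-p) ≤ c * (M : ℝ) ^ (-p) := by
      gcongr ?_ * ?_
      exact Real.rpow_le_rpow_of_nonpos M_pos (by linarith) (neg_nonpos.2 hp)
    _ ≤ ‖θ‖ := hΘ M hM θ hθ.1 hθ.2
  intro θ₁ h₁ θ₂ h₂ hne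
  have le_norm_sub : c * (2 * M : ℝ) ^ (-p) ≤ ‖θ₁ - θ₂‖ := by
    simpa [two_mul] using
      hΘ (M + M) (by lia) _ (sub_mem_add_nsmul hsym h₁.1 h₂.1) (sub_ne_zero.2 hne)
  exact disjoint_resonanceZone (by positivity) hw (le_norm h₁) (le_norm h₂) le_norm_sub

theorem eventually_pairwiseDisjoint_resonanceZone (hΘ : IsDiophantine Θ c p)
    (hsym : ∀ x ∈ Θ, -x ∈ Θ) (hc : 0 < c) (hp : 0 ≤ p) {K : ℕ} (hK : 1 ≤ K) {a : ℝ}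
    (ha : 0 ≤ a) (hap : a * p < 1 / 4) (A : ℝ) :
    ∀ᶠ ε : ℝ in 𝓝[>] 0,
      ((K * ⌈ε ^ (-a)⌉₊) • Θ \ {0}).PairwiseDisjoint (resonanceZone (A * √ε)) := by
  filter_upwards [eventually_mul_sqrt_le_sq_mul_natCeil_rpow_neg (C := 2 * K) (2 * A) hc
    (by positivity) ha hp hap, self_mem_nhdsWithin] with ε hle hε
  refine hΘ.pairwiseDisjoint_resonanceZone hsym hc hp ?_ ?_
  · exact Nat.mul_pos hK (Nat.ceil_pos.2 (Real.rpow_pos_of_pos hε _))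
  · simpa [mul_assoc] using hle

end IsDiophantine

theorem stmt_8_general {Θ : Set E} {c P₀ : ℝ} (hΘ : IsDiophantine Θ c P₀)
    (hsym : ∀ x ∈ Θ, -x ∈ Θ) (hc : 0 < c) (hP₀ : 0 ≤ P₀) {N : ℕ} (hN : 1 ≤ N) {P : ℝ}
    (hP : 8 * (N : ℝ) * P₀ < P) :
    ∃ ε₁ ∈ Set.Ioo (0 : ℝ) 1, ∀ ε ∈ Set.Ioo 0 ε₁,
      ((3 * N * ⌈ε ^ (-(2 * (N : ℝ)) / P)⌉₊) • Θ \ {0}).PairwiseDisjoint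
        (resonanceZone (5 / 2 * √ε)) := by
  have P_pos : 0 < P := lt_of_le_of_lt (by positivity) hP
  have exponent_lt : 2 * (N : ℝ) / P * P₀ < 1 / 4 := by
    rw [div_mul_eq_mul_div, div_lt_iff₀ P_pos]
    linarith
  have eventually_disjoint := hΘ.eventually_pairwiseDisjoint_resonanceZone hsym hc hP₀
    (K := 3 * N) (by lia) (by positivity) exponent_lt (5 / 2)
  obtain ⟨ε₁, hε₁, hsub⟩ :=
    (mem_nhdsGT_iff_exists_mem_Ioc_Ioo_subset (one_half_pos (α := ℝ))).1 eventually_disjoint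
  refine ⟨ε₁, ⟨hε₁.1, hε₁.2.trans_lt one_half_lt_one⟩, fun ε hε ↦ ?_⟩
  simpa only [neg_div, Set.mem_ofPred_eq] using hsub hε

/-- Under the Diophantine condition `|θ| ≥ c·m^{-P₀}` for `θ ∈ Θ_m \ {0}` and `P > 24NP₀`,
for all sufficiently small `ε` the wide resonance zones
`R'(θ) = (−θ − (5/2)√ε/|θ|, −θ + (5/2)√ε/|θ|)`, `θ ∈ Θ_{3N L̃} \ {0}` with
`L̃ = ⌈ε^{-2N/P}⌉`, are pairwise disjoint. -/
theorem stmt_8 (Θ : Finset ℝ) (hsym : ∀ x ∈ Θ, -x ∈ Θ) (h0 : (0:ℝ) ∈ Θ)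
    (c P₀ : ℝ) (hc : 0 < c) (hP₀ : 0 < P₀)
    (hdioph : ∀ m : ℕ, 1 ≤ m → ∀ θ ∈ sumset Θ m, θ ≠ 0 → c * (m : ℝ) ^ (-P₀) ≤ |θ|)
    (N : ℕ) (hN : 1 ≤ N) (P : ℝ) (hP : 24 * (N : ℝ) * P₀ < P) :
    ∃ ε₁ : ℝ, ε₁ ∈ Set.Ioo (0:ℝ) 1 ∧ ∀ ε : ℝ, ε ∈ Set.Ioo 0 ε₁ →
      ∀ θ₁ ∈ sumset Θ (3 * N * ⌈ε ^ (-(2 * (N : ℝ)) / P)⌉₊), θ₁ ≠ 0 →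
      ∀ θ₂ ∈ sumset Θ (3 * N * ⌈ε ^ (-(2 * (N : ℝ)) / P)⌉₊), θ₂ ≠ 0 →
      θ₁ ≠ θ₂ →
        Set.Ioo (-θ₁ - (5 / 2) * Real.sqrt ε / |θ₁|) (-θ₁ + (5 / 2) * Real.sqrt ε / |θ₁|) ∩
          Set.Ioo (-θ₂ - (5 / 2) * Real.sqrt ε / |θ₂|) (-θ₂ + (5 / 2) * Real.sqrt ε / |θ₂|)
          = ∅ := by
  have hΘ : IsDiophantine (Θ : Set ℝ) c P₀ := fun m hm θ hθ ↦
    hdioph m hm θ (mem_sumset_iff_mem_nsmul_coe.2 hθ)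
  obtain ⟨ε₁, hε₁, hdisj⟩ :=
    stmt_8_general hΘ hsym hc hP₀.le hN (lt_of_le_of_lt (by gcongr; norm_num) hP)
  simp only [mem_sumset_iff_mem_nsmul_coe, ← resonanceZone_eq_Ioo,
    ← Set.disjoint_iff_inter_eq_empty]
  exact ⟨ε₁, hε₁, fun ε hε θ₁ h₁ h₁0 θ₂ h₂ h₂0 hne ↦ hdisj ε hε ⟨h₁, h₁0⟩ ⟨h₂, h₂0⟩ hne⟩
end

section
/- Let θ₀ be a nonzero real number, K ∈ ℝ, h₀ ∈ [0, θ₀²/4], and a ∈ (0, |θ₀|/6]. Let u, v : [−a, a] → ℝ satisfy 0 ≤ u(ζ) ≤ 2 and 2θ₀² ≤ v(ζ) ≤ 8θ₀² for all ζ ∈ [−a, a], and define σ_±(ζ) := K + ζ²·u(ζ) ± (ζ²·v(ζ) + h₀²)^{1/2}. Then for every ζ ∈ [−a, a] one has σ₋(ζ) ≤ K − h₀ and σ₊(ζ) ≥ K + h₀, with equality exactly at ζ = 0; consequently the maximum of σ₋ over [−a, a] is σ₋(0) = K − h₀, the minimum of σ₊ over [−a, a] is σ₊(0) = K + h₀,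 and the open interval (K − h₀, K + h₀), of length 2h₀, is disjoint from the ranges of σ₋ and σ₊. -/
/-!
For `ζ ≠ 0`, squaring reduces the strict inequality `h₀ + ζ² |u| < (ζ² v + h₀²)^{1/2}` to
`2 h₀ |u| + ζ² u² < v`, and it pushes both branches out of the closed gap because `± ζ² u ≤ ζ² |u|`.
In the resonance zone `2 h₀ |u| ≤ θ₀²`, `ζ² u² < θ₀²` and `2 θ₀² ≤ v`.
-/

section StrictExtrema

variable {α β : Type*} [Preorder β] {f : α → β} {s : Set α} {x₀ x : α}

theorem isMaxOn_of_forall_ne_lt (h : ∀ x ∈ s, x ≠ x₀ → f x < f x₀) : IsMaxOn f s x₀ := by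
  intro x hx
  obtain rfl | hne := eq_or_ne x x₀
  · exact le_rfl
  · exact (h x hx hne).le

theorem isMinOn_of_forall_ne_lt (h : ∀ x ∈ s, x ≠ x₀ → f x₀ < f x) : IsMinOn f s x₀ :=
  isMaxOn_of_forall_ne_lt (β := βᵒᵈ) h

theorem apply_eq_iff_eq_of_forall_ne_ne {γ : Type*} {g : α → γ}
    (h : ∀ x ∈ s, x ≠ x₀ → g x ≠ g x₀) (hx : x ∈ s) : g x = g x₀ ↔ x = x₀ :=
  ⟨not_imp_not.1 (h x hx), congrArg g⟩

end StrictExtrema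

/-- The lower eigenvalue branch `σ₋` of the model, for centre value `K`, off-diagonal coupling `h`
at the centre and coefficient functions `u`, `v`. -/
noncomputable def lowerBranch (K h : ℝ) (u v : ℝ → ℝ) (ζ : ℝ) : ℝ :=
  K + ζ ^ 2 * u ζ - Real.sqrt (ζ ^ 2 * v ζ + h ^ 2)

/-- The upper eigenvalue branch `σ₊` of the model, with the same parameters as `lowerBranch`. -/
noncomputable def upperBranch (K h : ℝ) (u v : ℝ → ℝ) (ζ : ℝ) : ℝ :=
  K + ζ ^ 2 * u ζ + Real.sqrt (ζ ^ 2 * v ζ + h ^ 2)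

theorem add_sq_mul_abs_lt_sqrt {h ζ u v : ℝ} (hζ : ζ ≠ 0)
    (huv : 2 * h * |u| + ζ ^ 2 * u ^ 2 < v) :
    h + ζ ^ 2 * |u| < Real.sqrt (ζ ^ 2 * v + h ^ 2) := by
  apply Real.lt_sqrt_of_sq_lt
  calc (h + ζ ^ 2 * |u|) ^ 2 = ζ ^ 2 * (2 * h * |u| + ζ ^ 2 * |u| ^ 2) + h ^ 2 := by ring
    _ = ζ ^ 2 * (2 * h * |u| + ζ ^ 2 * u ^ 2) + h ^ 2 := by rw [sq_abs]
    _ < ζ ^ 2 * v + h ^ 2 := by gcongr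

section Branches

variable {K h ζ : ℝ} {u v : ℝ → ℝ}

theorem lowerBranch_zero (hh : 0 ≤ h) : lowerBranch K h u v 0 = K - h := by
  simp [lowerBranch, Real.sqrt_sq hh]

theorem upperBranch_zero (hh : 0 ≤ h) : upperBranch K h u v 0 = K + h := by
  simp [upperBranch, Real.sqrt_sq hh]

theorem lowerBranch_lt_sub (hζ : ζ ≠ 0) (huv : 2 * h * |u ζ| + ζ ^ 2 * u ζ ^ 2 < v ζ) :
    lowerBranch K h u v ζ < K - h := by
  have hsqrt := add_sq_mul_abs_lt_sqrt hζ huv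
  have hu : ζ ^ 2 * u ζ ≤ ζ ^ 2 * |u ζ| := by gcongr; exact le_abs_self _
  unfold lowerBranch
  linarith

theorem add_lt_upperBranch (hζ : ζ ≠ 0) (huv : 2 * h * |u ζ| + ζ ^ 2 * u ζ ^ 2 < v ζ) :
    K + h < upperBranch K h u v ζ := by
  have hsqrt := add_sq_mul_abs_lt_sqrt hζ huv
  have hu : ζ ^ 2 * -u ζ ≤ ζ ^ 2 * |u ζ| := by gcongr; exact neg_le_abs _
  unfold upperBranch
  linarith

end Branches

theorem two_mul_mul_abs_add_sq_mul_sq_lt {θ h ζ u v : ℝ} (hh : h ≤ θ ^ 2 / 4)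
    (hζ : |ζ| < |θ| / 2) (hu : |u| ≤ 2) (hv : 2 * θ ^ 2 ≤ v) :
    2 * h * |u| + ζ ^ 2 * u ^ 2 < v := by
  have hζ_sq : ζ ^ 2 < (θ / 2) ^ 2 := sq_lt_sq.2 (by rwa [abs_div, abs_two])
  have hu_sq : u ^ 2 ≤ 2 ^ 2 := sq_le_sq.2 (by rwa [abs_two])
  calc 2 * h * |u| + ζ ^ 2 * u ^ 2
      ≤ 2 * (θ ^ 2 / 4) * 2 + ζ ^ 2 * 2 ^ 2 := by gcongr
    _ < 2 * (θ ^ 2 / 4) * 2 + (θ / 2) ^ 2 * 2 ^ 2 := by gcongr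
    _ = 2 * θ ^ 2 := by ring
    _ ≤ v := hv

theorem stmt_11_general {K h : ℝ} {u v : ℝ → ℝ} {s : Set ℝ} (hh : 0 ≤ h)
    (huv : ∀ ζ ∈ s, ζ ≠ 0 → 2 * h * |u ζ| + ζ ^ 2 * u ζ ^ 2 < v ζ) :
    (∀ ζ ∈ s, lowerBranch K h u v ζ ≤ K - h) ∧
    (∀ ζ ∈ s, K + h ≤ upperBranch K h u v ζ) ∧
    (∀ ζ ∈ s, (lowerBranch K h u v ζ = K - h ↔ ζ = 0)) ∧
    (∀ ζ ∈ s, (upperBranch K h u v ζ = K + h ↔ ζ = 0)) ∧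
    IsMaxOn (lowerBranch K h u v) s 0 ∧
    IsMinOn (upperBranch K h u v) s 0 ∧
    lowerBranch K h u v 0 = K - h ∧ upperBranch K h u v 0 = K + h ∧
    (∀ ζ ∈ s, lowerBranch K h u v ζ ∉ Set.Ioo (K - h) (K + h)) ∧
    (∀ ζ ∈ s, upperBranch K h u v ζ ∉ Set.Ioo (K - h) (K + h)) := by
  have lower_zero : lowerBranch K h u v 0 = K - h := lowerBranch_zero hh
  have upper_zero : upperBranch K h u v 0 = K + h := upperBranch_zero hh
  have lower_lt : ∀ ζ ∈ s, ζ ≠ 0 → lowerBranch K h u v ζ < lowerBranch K h u v 0 :=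
    fun ζ hζ hne => lower_zero ▸ lowerBranch_lt_sub hne (huv ζ hζ hne)
  have lt_upper : ∀ ζ ∈ s, ζ ≠ 0 → upperBranch K h u v 0 < upperBranch K h u v ζ :=
    fun ζ hζ hne => upper_zero ▸ add_lt_upperBranch hne (huv ζ hζ hne)
  have lower_max := isMaxOn_of_forall_ne_lt lower_lt
  have upper_min := isMinOn_of_forall_ne_lt lt_upper
  rw [← lower_zero, ← upper_zero]
  exact ⟨fun _ hζ => lower_max hζ, fun _ hζ => upper_min hζ,
    fun _ hζ => apply_eq_iff_eq_of_forall_ne_ne (fun ζ hζ hne => (lower_lt ζ hζ hne).ne) hζ,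
    fun _ hζ => apply_eq_iff_eq_of_forall_ne_ne (fun ζ hζ hne => (lt_upper ζ hζ hne).ne') hζ,
    lower_max, upper_min, rfl, rfl,
    fun _ hζ hgap => hgap.1.not_ge (lower_max hζ),
    fun _ hζ hgap => hgap.2.not_ge (upper_min hζ)⟩

/-- For the model eigenvalue branches `σ_±(ζ) = K + ζ²u(ζ) ± (ζ²v(ζ) + h₀²)^{1/2}` over the
resonance zone, one has `σ₋ ≤ K − h₀ ≤ K + h₀ ≤ σ₊` on `[−a, a]` with equality exactly at
`ζ = 0`; hence the maximum of `σ₋` is `σ₋(0) = K − h₀`, the minimum of `σ₊` is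
`σ₊(0) = K + h₀`, and the open interval `(K − h₀, K + h₀)` is disjoint from both ranges. -/
theorem stmt_11 (θ₀ : ℝ) (hθ₀ : θ₀ ≠ 0) (K h₀ : ℝ)
    (hh₀ : h₀ ∈ Set.Icc (0:ℝ) (θ₀ ^ 2 / 4)) (a : ℝ) (ha : a ∈ Set.Ioc (0:ℝ) (|θ₀| / 6))
    (u v : ℝ → ℝ)
    (hu : ∀ ζ ∈ Set.Icc (-a) a, 0 ≤ u ζ ∧ u ζ ≤ 2)
    (hv : ∀ ζ ∈ Set.Icc (-a) a, 2 * θ₀ ^ 2 ≤ v ζ ∧ v ζ ≤ 8 * θ₀ ^ 2)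
    (σm σp : ℝ → ℝ)
    (hσm : ∀ ζ : ℝ, σm ζ = K + ζ ^ 2 * u ζ - Real.sqrt (ζ ^ 2 * v ζ + h₀ ^ 2))
    (hσp : ∀ ζ : ℝ, σp ζ = K + ζ ^ 2 * u ζ + Real.sqrt (ζ ^ 2 * v ζ + h₀ ^ 2)) :
    (∀ ζ ∈ Set.Icc (-a) a, σm ζ ≤ K - h₀) ∧
    (∀ ζ ∈ Set.Icc (-a) a, K + h₀ ≤ σp ζ) ∧
    (∀ ζ ∈ Set.Icc (-a) a, (σm ζ = K - h₀ ↔ ζ = 0)) ∧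
    (∀ ζ ∈ Set.Icc (-a) a, (σp ζ = K + h₀ ↔ ζ = 0)) ∧
    IsMaxOn σm (Set.Icc (-a) a) 0 ∧
    IsMinOn σp (Set.Icc (-a) a) 0 ∧
    σm 0 = K - h₀ ∧ σp 0 = K + h₀ ∧
    (∀ ζ ∈ Set.Icc (-a) a, σm ζ ∉ Set.Ioo (K - h₀) (K + h₀)) ∧
    (∀ ζ ∈ Set.Icc (-a) a, σp ζ ∉ Set.Ioo (K - h₀) (K + h₀)) := by
  obtain rfl : σm = lowerBranch K h₀ u v := funext hσm
  obtain rfl : σp = upperBranch K h₀ u v := funext hσp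
  refine stmt_11_general hh₀.1 fun ζ hζ _ => ?_
  have hζ_lt : |ζ| < |θ₀| / 2 := by linarith [abs_le.2 hζ, ha.2, abs_pos.2 hθ₀]
  have hu_abs : |u ζ| ≤ 2 := (abs_of_nonneg (hu ζ hζ).1).trans_le (hu ζ hζ).2
  exact two_mul_mul_abs_add_sq_mul_sq_lt hh₀.2 hζ_lt hu_abs (hv ζ hζ).1
end

section
/- Let N ≥ 2 be a natural number, τ < 0 a real number, and let f_2, …, f_N : ℝ → ℝ be infinitely differentiable functions that are bounded together with all their derivatives. Then there exist real numbers a_1, …, a_{N−1}, a constant C > 0, and ε₁ > 0 such that for every ε ∈ (0, ε₁) and every measurable function r : ℝ → ℝ with sup_ξ |r(ξ)| ≤ ε^{N+1}, the Lebesgue measure of the set S := {ξ ∈ ℝ : ξ² + ετ + Σ_{p=2}^{N} ε^p f_p(ξ) + r(ξ) < 0} satisfies |meas(S) − ε^{1/2}(2|τ|^{1/2} + Σ_{p=1}^{N−1} a_p ε^p)| ≤ C·ε^{N + 1/2}. -/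
open MeasureTheory

/-!
Put `ε = s ^ 2` and `ξ = s * y`. Up to the factor `s ^ 2` the symbol becomes
`y ^ 2 + h s y + O(s ^ (2 * N))`, where `h 0 = τ` and the Lipschitz constant of `h s` tends to `0`.
The function `y ^ 2 + h s y` therefore has one nonnegative zero `φ s`, close to `√|τ|`, and crosses
it with slope bounded below; by the implicit function theorem `φ` is smooth at `0`. Since
`h (-s) (-y) = h s y`, the nonpositive zero is `-φ (-s)`, so the sublevel set has measure
`φ s + φ (-s) + O(s ^ (2 * N))`. The function `φ s + φ (-s)` is even, hence its Taylor
polynomial in `s` is a polynomial in `s ^ 2 = ε`.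
-/

open Asymptotics Filter Finset Topology
open scoped NNReal

theorem sum_range_two_mul_of_odd_eq_zero {M : Type*} [AddCommMonoid M] {g : ℕ → M}
    (hg : ∀ k, Odd k → g k = 0) (n : ℕ) :
    ∑ k ∈ range (2 * n), g k = ∑ p ∈ range n, g (2 * p) := by
  induction n with
  | zero => simp
  | succ n ih =>
    rw [mul_add_one, sum_range_succ, sum_range_succ, sum_range_succ, ih,
      hg (2 * n + 1) (odd_two_mul_add_one n), add_zero]

theorem iteratedDeriv_zero_eq_zero_of_even {𝕜 F : Type*} [NontriviallyNormedField 𝕜] [CharZero 𝕜]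
    [NormedAddCommGroup F] [NormedSpace 𝕜 F] {f : 𝕜 → F} (hf : Function.Even f) {k : ℕ}
    (hk : Odd k) : iteratedDeriv k f 0 = 0 := by
  have : IsAddTorsionFree F := .of_isTorsionFree 𝕜 F
  have h := iteratedDeriv_comp_neg k f 0
  rwa [funext hf, hk.neg_one_pow, neg_zero, neg_one_smul, self_eq_neg] at h

section Taylor

variable {E : Type*} [NormedAddCommGroup E] [NormedSpace ℝ E] {f : ℝ → E}

theorem isBigO_sub_sum_range_iteratedDeriv {x₀ : ℝ} {n : ℕ} (hf : ContDiffAt ℝ n f x₀) :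
    (fun x ↦ f x -
        ∑ k ∈ range n, ((k.factorial : ℝ)⁻¹ * (x - x₀) ^ k) • iteratedDeriv k f x₀)
      =O[𝓝 x₀] fun x ↦ (x - x₀) ^ n := by
  obtain ⟨u, hu, hfu⟩ := hf.contDiffOn le_rfl (by simp)
  obtain ⟨δ, hδ, hball⟩ := Metric.mem_nhds_iff.1 hu
  have hx₀ : x₀ ∈ Metric.ball x₀ δ := Metric.mem_ball_self hδ
  have htaylor := (taylor_isLittleO (convex_ball x₀ δ) hx₀ (hfu.mono hball)).isBigO
  rw [Metric.isOpen_ball.nhdsWithin_eq hx₀] at htaylor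
  have hlast : (fun x ↦ ((n.factorial : ℝ)⁻¹ * (x - x₀) ^ n) • iteratedDeriv n f x₀)
      =O[𝓝 x₀] fun x ↦ (x - x₀) ^ n := by
    simpa using
      ((isBigO_refl (fun x : ℝ ↦ (x - x₀) ^ n) (𝓝 x₀)).const_mul_left (n.factorial : ℝ)⁻¹).smul
        (isBigO_const_const (iteratedDeriv n f x₀) (one_ne_zero (α := ℝ)) (𝓝 x₀))
  refine (htaylor.add hlast).congr_left fun x ↦ ?_
  simp only [taylor_within_apply, iteratedDerivWithin_of_isOpen Metric.isOpen_ball hx₀,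
    sum_range_succ]
  abel

theorem isBigO_sub_sum_range_iteratedDeriv_of_even {n : ℕ} (hf : ContDiffAt ℝ (2 * n : ℕ) f 0)
    (heven : Function.Even f) :
    (fun x ↦ f x -
        ∑ p ∈ range n, (((2 * p).factorial : ℝ)⁻¹ * x ^ (2 * p)) • iteratedDeriv (2 * p) f 0)
      =O[𝓝 0] fun x ↦ x ^ (2 * n) := by
  have htaylor := isBigO_sub_sum_range_iteratedDeriv hf
  simp only [sub_zero] at htaylor
  refine htaylor.congr_left fun x ↦ ?_
  rw [sum_range_two_mul_of_odd_eq_zero fun k hk ↦ ?_]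
  rw [iteratedDeriv_zero_eq_zero_of_even heven hk, smul_zero]

end Taylor

theorem exists_contDiffAt_implicit {𝕜 E : Type*} [RCLike 𝕜] [NormedAddCommGroup E]
    [NormedSpace 𝕜 E] [CompleteSpace E] {n : WithTop ℕ∞} (hn : n ≠ 0) {G : E × 𝕜 → 𝕜} {x₀ : E}
    {y₀ m : 𝕜} (hG : ContDiffAt 𝕜 n G (x₀, y₀)) (hderiv : HasDerivAt (fun y ↦ G (x₀, y)) m y₀)
    (hm : m ≠ 0) :
    ∃ φ : E → 𝕜, φ x₀ = y₀ ∧ ContDiffAt 𝕜 n φ x₀ ∧ ∀ᶠ x in 𝓝 x₀, G (x, φ x) = G (x₀, y₀) := by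
  have hpartial : fderiv 𝕜 G (x₀, y₀) (0, 1) = m :=
    ((hG.differentiableAt hn).hasFDerivAt.comp_hasDerivAt y₀
      ((hasDerivAt_const y₀ x₀).prodMk (hasDerivAt_id y₀))).unique hderiv
  have hinv : (fderiv 𝕜 G (x₀, y₀) ∘L .inr 𝕜 E 𝕜).IsInvertible := by
    refine ⟨ContinuousLinearEquiv.unitsEquivAut 𝕜 (Units.mk0 m hm), ?_⟩
    ext
    simp [hpartial]
  exact ⟨hG.implicitFunction hn hinv, hG.implicitFunction_apply_self hn hinv,
    hG.contDiffAt_implicitFunction hn hinv, hG.eventually_apply_implicitFunction hn hinv⟩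

theorem lipschitzWith_sum {ι α E : Type*} [PseudoEMetricSpace α] [SeminormedAddCommGroup E]
    {t : Finset ι} {f : ι → α → E} {K : ι → ℝ≥0} (hf : ∀ i ∈ t, LipschitzWith (K i) (f i)) :
    LipschitzWith (∑ i ∈ t, K i) fun x ↦ ∑ i ∈ t, f i x := by
  classical
  induction t using Finset.induction_on with
  | empty => simpa using LipschitzWith.const (0 : E)
  | insert i t hi ih =>
    simp only [sum_insert hi]
    exact (hf i (mem_insert_self i t)).add (ih fun j hj ↦ hf j (mem_insert_of_mem hj))

section Volume

theorem abs_volume_real_sub_le_of_Ioo_subset_of_subset_Icc {S : Set ℝ} {x y η : ℝ}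
    (hinner : Set.Ioo (x + η) (y - η) ⊆ S)
    (houter : S ⊆ Set.Icc (x - η) (y + η)) (hle : x - η ≤ y + η) :
    |volume.real S - (y - x)| ≤ 2 * η := by
  have hupper : volume.real S ≤ y + η - (x - η) :=
    (measureReal_mono houter measure_Icc_lt_top.ne).trans_eq (Real.volume_real_Icc_of_le hle)
  have hlower : y - η - (x + η) ≤ volume.real S := calc
    y - η - (x + η) ≤ volume.real (Set.Ioo (x + η) (y - η)) := by
      rw [Real.volume_real_Ioo]
      exact le_max_left _ _
    _ ≤ volume.real S :=
      measureReal_mono hinner (measure_ne_top_of_subset houter measure_Icc_lt_top.ne)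
  rw [abs_le]
  constructor <;> linarith

theorem volume_real_eq_abs_mul_preimage_mul_left {s : ℝ} (hs : s ≠ 0) (S : Set ℝ) :
    volume.real S = |s| * volume.real ((s * ·) ⁻¹' S) := by
  rw [measureReal_def, measureReal_def, Real.volume_preimage_mul_left hs, abs_inv,
    ENNReal.toReal_mul, ENNReal.toReal_ofReal (inv_nonneg.2 (abs_nonneg s)),
    mul_inv_cancel_left₀ (abs_ne_zero.2 hs)]

end Volume

section LipschitzPerturbation

variable {h : ℝ → ℝ} {K : ℝ≥0}

theorem mul_sub_le_sq_add_sub_sq_add (hh : LipschitzWith K h) {y z : ℝ} (hy : 0 ≤ y) (hyz : y ≤ z) :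
    (z - K) * (z - y) ≤ (z ^ 2 + h z) - (y ^ 2 + h y) := by
  have hlip := neg_le_of_abs_le (hh.dist_le_mul z y)
  rw [Real.dist_eq, abs_of_nonneg (sub_nonneg.2 hyz)] at hlip
  nlinarith [mul_nonneg hy (sub_nonneg.2 hyz)]

variable {c u η : ℝ}

theorem sq_add_lt_neg_of_lt_root_sub (hh : LipschitzWith K h) (hc : 0 < c) (hu : c + K ≤ u)
    (hroot : u ^ 2 + h u = 0) (hη : 0 ≤ η) {y : ℝ} (hy : 0 ≤ y) (hyu : y < u - η / c) :
    y ^ 2 + h y < -η := by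
  have hgap : η / c < u - y := by linarith
  have hyu' : 0 ≤ u - y := (div_nonneg hη hc.le).trans hgap.le
  have hη_lt : η < (u - K) * (u - y) := calc
    η < c * (u - y) := (div_lt_iff₀' hc).1 hgap
    _ ≤ (u - K) * (u - y) := by gcongr; linarith
  linarith [mul_sub_le_sq_add_sub_sq_add hh hy (sub_nonneg.1 hyu')]

theorem lt_sq_add_of_root_add_lt (hh : LipschitzWith K h) (hc : 0 < c) (hu : c + K ≤ u)
    (hroot : u ^ 2 + h u = 0) (hη : 0 ≤ η) {y : ℝ} (huy : u + η / c < y) :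
    η < y ^ 2 + h y := by
  have hgap : η / c < y - u := by linarith
  have huy' : 0 ≤ y - u := (div_nonneg hη hc.le).trans hgap.le
  have hη_lt : η < (y - K) * (y - u) := calc
    η < c * (y - u) := (div_lt_iff₀' hc).1 hgap
    _ ≤ (y - K) * (y - u) := by gcongr; linarith
  linarith [mul_sub_le_sq_add_sub_sq_add hh (by linarith [K.coe_nonneg]) (sub_nonneg.1 huy')]

theorem abs_volume_real_sq_add_neg_sub_roots_le {r : ℝ → ℝ} {v : ℝ} (hh : LipschitzWith K h)
    (hc : 0 < c) (hu : c + K ≤ u) (hv : c + K ≤ v) (hu_root : u ^ 2 + h u = 0)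
    (hv_root : v ^ 2 + h (-v) = 0) (hr : ∀ y, |r y| ≤ η) :
    |volume.real {y | y ^ 2 + h y + r y < 0} - (u + v)| ≤ 2 * (η / c) := by
  have hη : 0 ≤ η := (abs_nonneg _).trans (hr 0)
  have hηc : 0 ≤ η / c := div_nonneg hη hc.le
  have hh_neg : LipschitzWith K fun y ↦ h (-y) := by
    simpa [Function.comp_def] using hh.comp LipschitzWith.id.neg
  rw [← sub_neg_eq_add]
  refine abs_volume_real_sub_le_of_Ioo_subset_of_subset_Icc (fun y hy ↦ ?_)
    (fun y (hy : y ^ 2 + h y + r y < 0) ↦ ?_)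
    (by linarith [K.coe_nonneg])
  · suffices y ^ 2 + h y < -η by
      have : y ^ 2 + h y + r y < 0 := by linarith [le_of_abs_le (hr y)]
      exact this
    rcases le_total 0 y with hy0 | hy0
    · exact sq_add_lt_neg_of_lt_root_sub hh hc hu hu_root hη hy0 hy.2
    · simpa using sq_add_lt_neg_of_lt_root_sub hh_neg hc hv hv_root hη (neg_nonneg.2 hy0)
        (by linarith [hy.1])
  · have hyη : y ^ 2 + h y < η := by linarith [neg_le_of_abs_le (hr y)]
    constructor
    · by_contra! hlt
      have := lt_sq_add_of_root_add_lt hh_neg hc hv hv_root hη (y := -y) (by linarith)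
      rw [neg_sq, neg_neg] at this
      exact this.not_gt hyη
    · by_contra! hlt
      exact (lt_sq_add_of_root_add_lt hh hc hu hu_root hη hlt).not_gt hyη

end LipschitzPerturbation

section SymmetricFamily

variable {h : ℝ → ℝ → ℝ} {b : ℝ}

theorem exists_contDiffAt_root_sq_add {n : WithTop ℕ∞} (hn : n ≠ 0) (hb : b ≠ 0)
    (hsmooth : ContDiffAt ℝ n h.uncurry (0, b)) (hzero : ∀ y, h 0 y = -b ^ 2) :
    ∃ φ : ℝ → ℝ, φ 0 = b ∧ ContDiffAt ℝ n φ 0 ∧ ∀ᶠ s in 𝓝 0, φ s ^ 2 + h s (φ s) = 0 := by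
  have hderiv : HasDerivAt (fun y ↦ y ^ 2 + h 0 y) (2 * b) b := by
    simpa [hzero] using (hasDerivAt_pow 2 b).add_const (-b ^ 2)
  obtain ⟨φ, hφ0, hφ, hroot⟩ := exists_contDiffAt_implicit hn
    ((contDiffAt_snd.pow 2).add hsmooth) hderiv (mul_ne_zero two_ne_zero hb)
  refine ⟨φ, hφ0, hφ, hroot.mono fun s hs ↦ ?_⟩
  simpa [hzero] using hs

theorem exists_expansion_volume_real_sq_add_neg {N : ℕ} (hN : N ≠ 0) (hb : 0 < b)
    (hsmooth : ContDiffAt ℝ (2 * N : ℕ) h.uncurry (0, b)) (hzero : ∀ y, h 0 y = -b ^ 2)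
    (hsymm : ∀ s y, h (-s) (-y) = h s y) {K : ℝ → ℝ≥0} (hK : Tendsto K (𝓝 0) (𝓝 0))
    (hlip : ∀ s, LipschitzWith (K s) (h s)) :
    ∃ a : ℕ → ℝ, a 0 = 2 * b ∧ ∃ C : ℝ, 0 < C ∧ ∀ᶠ s in 𝓝 0, ∀ r : ℝ → ℝ,
      (∀ y, |r y| ≤ s ^ (2 * N)) →
        |volume.real {y | y ^ 2 + h s y + r y < 0} - ∑ p ∈ range N, a p * s ^ (2 * p)| ≤
          C * s ^ (2 * N) := by
  obtain ⟨φ, hφ0, hφ, hroot⟩ :=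
    exists_contDiffAt_root_sq_add (by exact_mod_cast (by omega : 2 * N ≠ 0)) hb.ne' hsmooth hzero
  have htendsto_neg : Tendsto (fun s : ℝ ↦ -s) (𝓝 0) (𝓝 0) := by
    simpa using (continuous_neg (G := ℝ)).tendsto 0
  have hwidth : ContDiffAt ℝ (2 * N : ℕ) (fun s ↦ φ s + φ (-s)) 0 :=
    hφ.add (ContDiffAt.comp 0 (by simpa using hφ) contDiffAt_id.neg)
  have heven : Function.Even fun s ↦ φ s + φ (-s) := fun s ↦ by
    simp only [neg_neg, add_comm]
  obtain ⟨C, hC, hexpansion⟩ :=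
    (isBigO_sub_sum_range_iteratedDeriv_of_even hwidth heven).exists_pos
  have hlarge : ∀ᶠ s in 𝓝 0, b / 2 + K s < φ s ∧ b / 2 + K s < φ (-s) := by
    have hKb : Tendsto (fun s ↦ b / 2 + (K s : ℝ)) (𝓝 0) (𝓝 (b / 2)) := by
      simpa using (NNReal.tendsto_coe.2 hK).const_add (b / 2)
    have hφb : Tendsto φ (𝓝 0) (𝓝 b) := hφ0 ▸ hφ.continuousAt
    exact (hKb.eventually_lt hφb (half_lt_self hb)).and
      (hKb.eventually_lt (hφb.comp htendsto_neg) (half_lt_self hb))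
  refine ⟨fun p ↦ ((2 * p).factorial : ℝ)⁻¹ * iteratedDeriv (2 * p) (fun s ↦ φ s + φ (-s)) 0,
    by simp [hφ0, two_mul], 2 / (b / 2) + C, by positivity, ?_⟩
  filter_upwards [hroot, htendsto_neg.eventually hroot, hlarge, hexpansion.bound]
    with s hpos hneg ⟨hlarge_pos, hlarge_neg⟩ htaylor r hr
  have hneg' : φ (-s) ^ 2 + h s (-φ (-s)) = 0 := by rwa [← hsymm, neg_neg]
  have hmeas := abs_volume_real_sq_add_neg_sub_roots_le (hlip s) (half_pos hb)
    hlarge_pos.le hlarge_neg.le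
    hpos hneg' hr
  have hs : |s ^ (2 * N)| = s ^ (2 * N) := abs_of_nonneg ((even_two_mul N).pow_nonneg s)
  simp only [smul_eq_mul, Real.norm_eq_abs, hs, mul_right_comm _ (s ^ _)] at htaylor
  refine (abs_sub_le _ (φ s + φ (-s)) _).trans ((add_le_add hmeas htaylor).trans_eq ?_)
  ring

end SymmetricFamily

/-- The lower-order part of the symbol `ξ ^ 2 + ε * τ + ∑ p ∈ Icc 2 N, ε ^ p * f p ξ` after the
substitution `ε = s ^ 2`, `ξ = s * y` and division by `s ^ 2`. In contrast to `√ε`, the parameter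
`s` may have either sign. -/
noncomputable def rescaledPotential (N : ℕ) (τ : ℝ) (f : ℕ → ℝ → ℝ) (s y : ℝ) : ℝ :=
  τ + ∑ p ∈ Icc 2 N, s ^ (2 * (p - 1)) * f p (s * y)

namespace rescaledPotential

variable (N : ℕ) (τ : ℝ) (f : ℕ → ℝ → ℝ)

theorem zero_left (y : ℝ) : rescaledPotential N τ f 0 y = τ := by
  refine add_eq_left.2 (sum_eq_zero fun p hp ↦ ?_)
  rw [zero_pow (by grind), zero_mul]

theorem apply_neg_neg (s y : ℝ) :
    rescaledPotential N τ f (-s) (-y) = rescaledPotential N τ f s y := by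
  simp only [rescaledPotential, neg_mul_neg, (even_two_mul _).neg_pow]

theorem sq_mul_sq_add (s y : ℝ) :
    s ^ 2 * (y ^ 2 + rescaledPotential N τ f s y) =
      (s * y) ^ 2 + s ^ 2 * τ + ∑ p ∈ Icc 2 N, (s ^ 2) ^ p * f p (s * y) := by
  have hsum : s ^ 2 * ∑ p ∈ Icc 2 N, s ^ (2 * (p - 1)) * f p (s * y) =
      ∑ p ∈ Icc 2 N, (s ^ 2) ^ p * f p (s * y) := by
    rw [mul_sum]
    refine sum_congr rfl fun p hp ↦ ?_
    rw [← mul_assoc, pow_mul, mul_pow_sub_one (by grind)]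
  rw [rescaledPotential, mul_add, mul_add, hsum]
  ring

variable {N f}

theorem contDiffAt_uncurry {n : WithTop ℕ∞} (hf : ∀ p ∈ Icc 2 N, ContDiffAt ℝ n (f p) 0) (y : ℝ) :
    ContDiffAt ℝ n (rescaledPotential N τ f).uncurry (0, y) := by
  refine contDiffAt_const.add (ContDiffAt.sum fun p hp ↦ (contDiffAt_fst.pow _).mul ?_)
  exact ContDiffAt.comp (0, y) (by simpa using hf p hp) (contDiffAt_fst.mul contDiffAt_snd)

theorem lipschitzWith {K : ℕ → ℝ≥0} (hf : ∀ p ∈ Icc 2 N, LipschitzWith (K p) (f p)) (s : ℝ) :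
    LipschitzWith (∑ p ∈ Icc 2 N, ‖s‖₊ ^ (2 * (p - 1)) * (K p * ‖s‖₊))
      (rescaledPotential N τ f s) := by
  rw [← zero_add (∑ p ∈ Icc 2 N, _)]
  refine (LipschitzWith.const τ).add (lipschitzWith_sum fun p hp ↦ ?_)
  rw [← nnnorm_pow]
  exact (lipschitzWith_smul (s ^ (2 * (p - 1)))).comp ((hf p hp).comp (lipschitzWith_smul s))

end rescaledPotential

theorem exists_expansion_volume_real_rescaledPotential {N : ℕ} (hN : N ≠ 0) {τ : ℝ} (hτ : τ < 0)
    {f : ℕ → ℝ → ℝ} (hf : ∀ p ∈ Icc 2 N, ContDiffAt ℝ (2 * N : ℕ) (f p) 0)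
    (hlip : ∀ p ∈ Icc 2 N, ∃ K, LipschitzWith K (f p)) :
    ∃ a : ℕ → ℝ, a 0 = 2 * √|τ| ∧ ∃ C : ℝ, 0 < C ∧ ∀ᶠ s in 𝓝 0, ∀ r : ℝ → ℝ,
      (∀ y, |r y| ≤ s ^ (2 * N)) →
        |volume.real {y | y ^ 2 + rescaledPotential N τ f s y + r y < 0} -
          ∑ p ∈ range N, a p * s ^ (2 * p)| ≤ C * s ^ (2 * N) := by
  choose! K hK using hlip
  have hKzero : Tendsto (fun s : ℝ ↦ ∑ p ∈ Icc 2 N, ‖s‖₊ ^ (2 * (p - 1)) * (K p * ‖s‖₊))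
      (𝓝 0) (𝓝 0) := by
    have hcont : Continuous fun s : ℝ ↦
        ∑ p ∈ Icc 2 N, ‖s‖₊ ^ (2 * (p - 1)) * (K p * ‖s‖₊) := by fun_prop
    simpa using hcont.tendsto 0
  have hsq : -√|τ| ^ 2 = τ := by rw [Real.sq_sqrt (abs_nonneg τ), abs_of_neg hτ, neg_neg]
  exact exists_expansion_volume_real_sq_add_neg hN (Real.sqrt_pos.2 (abs_pos.2 hτ.ne))
    (rescaledPotential.contDiffAt_uncurry τ hf _)
    (fun y ↦ by rw [rescaledPotential.zero_left, hsq])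
    (rescaledPotential.apply_neg_neg N τ f) hKzero (rescaledPotential.lipschitzWith τ hK)

theorem volume_real_symbol_neg_eq_sqrt_mul {ε : ℝ} (hε : 0 < ε) (N : ℕ) (τ : ℝ) (f : ℕ → ℝ → ℝ)
    (r : ℝ → ℝ) :
    volume.real {ξ | ξ ^ 2 + ε * τ + ∑ p ∈ Icc 2 N, ε ^ p * f p ξ + r ξ < 0} =
      √ε * volume.real {y | y ^ 2 + rescaledPotential N τ f √ε y + r (√ε * y) / ε < 0} := by
  rw [volume_real_eq_abs_mul_preimage_mul_left (Real.sqrt_ne_zero'.2 hε),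
    abs_of_nonneg (Real.sqrt_nonneg ε)]
  congr 2
  ext y
  have hsymbol := rescaledPotential.sq_mul_sq_add N τ f √ε y
  rw [Real.sq_sqrt hε.le] at hsymbol
  have hfactor : (√ε * y) ^ 2 + ε * τ + ∑ p ∈ Icc 2 N, ε ^ p * f p (√ε * y) + r (√ε * y) =
      ε * (y ^ 2 + rescaledPotential N τ f √ε y + r (√ε * y) / ε) := by
    rw [← hsymbol, mul_add ε _ (_ / ε), mul_div_cancel₀ _ hε.ne']
  rw [Set.mem_preimage, Set.mem_ofPred_eq, Set.mem_ofPred_eq, hfactor]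
  exact smul_neg_iff_of_pos_left hε

theorem stmt_13_general {N : ℕ} (hN : N ≠ 0) {τ : ℝ} (hτ : τ < 0) {f : ℕ → ℝ → ℝ}
    (hf : ∀ p ∈ Icc 2 N, ContDiffAt ℝ (2 * N : ℕ) (f p) 0)
    (hlip : ∀ p ∈ Icc 2 N, ∃ K, LipschitzWith K (f p)) :
    ∃ a : ℕ → ℝ, ∃ C : ℝ, 0 < C ∧ ∃ ε₁ : ℝ, 0 < ε₁ ∧ ∀ ε ∈ Set.Ioo 0 ε₁, ∀ r : ℝ → ℝ,
      (∀ ξ, |r ξ| ≤ ε ^ (N + 1)) →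
        |volume.real {ξ | ξ ^ 2 + ε * τ + ∑ p ∈ Icc 2 N, ε ^ p * f p ξ + r ξ < 0} -
          √ε * (2 * √|τ| + ∑ p ∈ Icc 1 (N - 1), a p * ε ^ p)| ≤ C * ε ^ N * √ε := by
  obtain ⟨a, ha0, C, hC, hexpansion⟩ :=
    exists_expansion_volume_real_rescaledPotential hN hτ hf hlip
  have hsqrt : Tendsto Real.sqrt (𝓝[>] 0) (𝓝 0) := by
    simpa using (Real.continuous_sqrt.tendsto 0).mono_left nhdsWithin_le_nhds
  obtain ⟨ε₁, hε₁, hsmall⟩ :=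
    mem_nhdsGT_iff_exists_Ioo_subset.1 (hsqrt.eventually hexpansion)
  refine ⟨a, C, hC, ε₁, hε₁, fun ε hε r hr ↦ ?_⟩
  have hpow (p : ℕ) : √ε ^ (2 * p) = ε ^ p := by rw [pow_mul, Real.sq_sqrt hε.1.le]
  have hrescaled : ∀ y, |r (√ε * y) / ε| ≤ √ε ^ (2 * N) := fun y ↦ by
    rw [hpow, abs_div, abs_of_pos hε.1, div_le_iff₀ hε.1, ← pow_succ]
    exact hr _
  have hsum : ∑ p ∈ range N, a p * ε ^ p = 2 * √|τ| + ∑ p ∈ Icc 1 (N - 1), a p * ε ^ p := by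
    rw [range_eq_Ico, sum_eq_sum_Ico_succ_bot (Nat.pos_of_ne_zero hN), ha0, pow_zero, mul_one,
      zero_add, Icc_sub_one_right_eq_Ico_of_not_isMin (by simpa using hN)]
  have hvolume := hsmall hε (fun y ↦ r (√ε * y) / ε) hrescaled
  simp only [hpow, hsum] at hvolume
  rw [volume_real_symbol_neg_eq_sqrt_mul hε.1, ← mul_sub, abs_mul,
    abs_of_nonneg (Real.sqrt_nonneg ε), mul_comm _ √ε]
  exact mul_le_mul_of_nonneg_left hvolume (Real.sqrt_nonneg ε)

theorem exists_lipschitzWith_of_abs_iteratedDeriv_one_le {g : ℝ → ℝ} (hg : Differentiable ℝ g)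
    (hbound : ∃ B : ℝ, ∀ x, |iteratedDeriv 1 g x| ≤ B) : ∃ K, LipschitzWith K g := by
  obtain ⟨B, hB⟩ := hbound
  refine ⟨B.toNNReal, lipschitzWith_of_nnnorm_deriv_le hg fun x ↦ ?_⟩
  rw [← NNReal.coe_le_coe, coe_nnnorm, Real.norm_eq_abs, ← iteratedDeriv_one]
  exact (hB x).trans (Real.le_coe_toNNReal B)

/-- Expansion of the integrated density of states at the bottom of the spectrum when the
mean value `τ < 0`: the measure of `{ξ : ξ² + ετ + Σ_{p=2}^N ε^p f_p(ξ) + r(ξ) < 0}` equals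
`ε^{1/2}(2|τ|^{1/2} + Σ_{p=1}^{N−1} a_p ε^p)` up to an error `C ε^{N+1/2}`, uniformly over
perturbations `r` bounded by `ε^{N+1}`. -/
theorem stmt_13 (N : ℕ) (hN : 2 ≤ N) (τ : ℝ) (hτ : τ < 0)
    (f : ℕ → ℝ → ℝ)
    (hf : ∀ p : ℕ, 2 ≤ p → p ≤ N → ContDiff ℝ (⊤ : ℕ∞) (f p))
    (hfb : ∀ p : ℕ, 2 ≤ p → p ≤ N → ∀ k : ℕ, ∃ B : ℝ,
      ∀ ξ : ℝ, |iteratedDeriv k (f p) ξ| ≤ B) :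
    ∃ a : ℕ → ℝ, ∃ C : ℝ, 0 < C ∧ ∃ ε₁ : ℝ, 0 < ε₁ ∧
      ∀ ε : ℝ, ε ∈ Set.Ioo 0 ε₁ →
      ∀ r : ℝ → ℝ, Measurable r → (∀ ξ : ℝ, |r ξ| ≤ ε ^ (N + 1)) →
        |(volume {ξ : ℝ |
            ξ ^ 2 + ε * τ + ∑ p ∈ Finset.Icc 2 N, ε ^ p * f p ξ + r ξ < 0}).toReal -
          Real.sqrt ε * (2 * Real.sqrt |τ| + ∑ p ∈ Finset.Icc 1 (N - 1), a p * ε ^ p)| ≤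
          C * ε ^ N * Real.sqrt ε := by
  simp only [← and_imp, ← Finset.mem_Icc] at hf hfb
  obtain ⟨a, C, hC, ε₁, hε₁, h⟩ := stmt_13_general (by omega) hτ
    (fun p hp ↦ ((hf p hp).of_le (WithTop.coe_le_coe.2 le_top)).contDiffAt)
    (fun p hp ↦ exists_lipschitzWith_of_abs_iteratedDeriv_one_le
      ((hf p hp).differentiable (by simp)) (hfb p hp 1))
  exact ⟨a, C, hC, ε₁, hε₁, fun ε hε r _ hr ↦ h ε hε r hr⟩
end

section
/- Let N ≥ 2 be a natural number and let f_2, …, f_N : ℝ → ℝ be infinitely differentiable functions that are bounded together with all their derivatives, with f_2(0) < 0. Then there exist real numbers a_1, …, a_{N−2}, a constant C > 0, and ε₁ > 0 such that for every ε ∈ (0, ε₁) and every measurable function r : ℝ → ℝ with sup_ξ |r(ξ)| ≤ ε^{N+1}, the Lebesgue measure of the set S := {ξ ∈ ℝ : ξ² + Σ_{p=2}^{N} ε^p f_p(ξ) + r(ξ) < 0} satisfies |meas(S) − ε(2(−f_2(0))^{1/2} + Σ_{p=1}^{N−2} a_p ε^p)| ≤ C·ε^{N}. -/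
open MeasureTheory

/-! The substitution `ξ = εη` turns `ε⁻²` times the symbol into a perturbation of a polynomial
`F(ε, η)` with `F(0, η) = η² - c²`, where `c² = -f₂(0)`; only the Taylor polynomials of the `f_p`
at `0` enter, since the symbol can be negative only for `ξ = O(ε)`. Hensel lifting extends the
roots `±c` to polynomials `P(ε)`, `Q(ε)` with `F = (η - P)(η - Q)U + O(ε^{n+1})` and `U` bounded
below by a positive constant. Up to an error `O(ε^{n+1})` the set where `F` is negative therefore
has measure `P(ε) - Q(ε)`, which is the asserted expansion. -/

section Algebra

open Polynomial Polynomial.Bivariate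

variable {R : Type*} [CommRing R]

lemma coeff_zero_eval (F : R[X][Y]) (P : R[X]) :
    (F.eval P).coeff 0 = (F.map constantCoeff).eval (P.coeff 0) :=
  (eval_map_apply constantCoeff P).symm

lemma evalEval_zero_left (F : R[X][Y]) (y : R) :
    F.evalEval 0 y = (F.map constantCoeff).eval y := by
  rw [evalEval, ← coeff_zero_eq_eval_zero, coeff_zero_eval, coeff_C_zero]

lemma eval_eq_coeff_zero_add_sum {A : R[X]} {n : ℕ} (hA : A.natDegree ≤ n) (x : R) :
    A.eval x = A.coeff 0 + ∑ p ∈ Finset.Icc 1 n, A.coeff p * x ^ p := by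
  rw [eval_eq_sum_range' (Nat.lt_succ_of_le hA), Finset.range_eq_Ico,
    Finset.sum_eq_sum_Ico_succ_bot n.succ_pos, pow_zero, mul_one]
  rfl

lemma exists_coeff_zero_eq_and_X_pow_dvd_eval {F : R[X][Y]} {c : R}
    (hc : (F.map constantCoeff).IsRoot c)
    (hc' : IsUnit ((F.map constantCoeff).derivative.eval c)) (n : ℕ) :
    ∃ P : R[X], P.natDegree ≤ n ∧ P.coeff 0 = c ∧ X ^ (n + 1) ∣ F.eval P := by
  induction n with
  | zero =>
    refine ⟨C c, by simp, by simp, ?_⟩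
    rw [zero_add, pow_one, X_dvd_iff, coeff_zero_eval, coeff_C_zero]
    exact hc
  | succ n ih =>
    obtain ⟨P, hdeg, hP, G, hG⟩ := ih
    obtain ⟨d, hd⟩ := hc'
    set b : R := -(↑d⁻¹ * G.coeff 0)
    obtain ⟨k, hk⟩ := F.binomExpansion P (X ^ (n + 1) * C b)
    have hX : X ∣ G + F.derivative.eval P * C b := by
      rw [X_dvd_iff, coeff_add, mul_coeff_zero, coeff_zero_eval, hP, ← derivative_map, ← hd]
      simp [b]
    refine ⟨P + X ^ (n + 1) * C b, ?_, by simp [hP], ?_⟩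
    · refine natDegree_add_le_of_degree_le (hdeg.trans n.le_succ) ?_
      exact (natDegree_mul_C_le _ _).trans (natDegree_X_pow_le _)
    · have hsplit : F.eval (P + X ^ (n + 1) * C b) =
          X ^ (n + 1) * (G + F.derivative.eval P * C b) +
            X ^ (n + 2) * (k * X ^ n * C b ^ 2) := by
        rw [hk, hG]; ring
      rw [hsplit, pow_succ X (n + 1)]
      exact dvd_add (mul_dvd_mul_left _ hX) (dvd_mul_right _ _)

lemma isCoprime_X_pow_of_isUnit_coeff_zero {p : R[X]} (hp : IsUnit (p.coeff 0)) (n : ℕ) :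
    IsCoprime (X ^ n) p := by
  obtain ⟨d, hd⟩ := hp
  refine IsCoprime.pow_left ⟨-(C (↑d⁻¹ : R) * p.divX), C (↑d⁻¹ : R), ?_⟩
  nth_rw 2 [← divX_mul_X_add p]
  rw [← hd, mul_add, ← C_mul, Units.inv_mul, C_1]
  ring

lemma exists_eq_factors_add_X_pow_mul {F : R[X][Y]} {P Q : R[X]} {n : ℕ}
    (hP : X ^ n ∣ F.eval P) (hQ : X ^ n ∣ F.eval Q) (hPQ : IsUnit ((Q - P).coeff 0)) :
    ∃ U V : R[X][Y], F = (X - C P) * (X - C Q) * U + C (X ^ n) * V := by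
  have hdiv : ∀ (G : R[X][Y]) (S : R[X]), G = (X - C S) * (G /ₘ (X - C S)) + C (G.eval S) :=
    fun G S ↦ by rw [← modByMonic_X_sub_C_eq_C_eval, add_comm, modByMonic_add_div]
  set G := F /ₘ (X - C P)
  have hGQ : X ^ n ∣ G.eval Q := by
    have heval : (Q - P) * G.eval Q = F.eval Q - F.eval P := by
      rw [congrArg (eval Q) (hdiv F P)]
      simp [G]
    exact (isCoprime_X_pow_of_isUnit_coeff_zero hPQ n).dvd_of_dvd_mul_left
      (heval ▸ dvd_sub hQ hP)
  obtain ⟨p, hp⟩ := hP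
  obtain ⟨q, hq⟩ := hGQ
  refine ⟨G /ₘ (X - C Q), (X - C P) * C q + C p, ?_⟩
  calc F = (X - C P) * G + C (F.eval P) := hdiv F P
    _ = (X - C P) * ((X - C Q) * (G /ₘ (X - C Q)) + C (G.eval Q)) + C (F.eval P) := by
      rw [← hdiv G Q]
    _ = _ := by rw [hp, hq, C_mul, C_mul]; ring

theorem exists_lift_factors_X_pow {F : R[X][Y]} {a b : R} {u : R[X]}
    (hF : F.map constantCoeff = (X - C a) * (X - C b) * u) (hab : IsUnit (a - b))
    (ha : IsUnit (u.eval a)) (hb : IsUnit (u.eval b)) (n : ℕ) :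
    ∃ (P Q : R[X]) (U V : R[X][Y]), (P.natDegree ≤ n ∧ P.coeff 0 = a) ∧
      (Q.natDegree ≤ n ∧ Q.coeff 0 = b) ∧ U.map constantCoeff = u ∧
      F = (X - C P) * (X - C Q) * U + C (X ^ (n + 1)) * V := by
  have hba : IsUnit (b - a) := by rw [← neg_sub]; exact hab.neg
  obtain ⟨P, hPdeg, hP, hFP⟩ := exists_coeff_zero_eq_and_X_pow_dvd_eval (F := F) (c := a)
    (by simp [hF]) (by simpa [hF, derivative_mul] using hab.mul ha) n
  obtain ⟨Q, hQdeg, hQ, hFQ⟩ := exists_coeff_zero_eq_and_X_pow_dvd_eval (F := F) (c := b)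
    (by simp [hF]) (by simpa [hF, derivative_mul] using hba.mul hb) n
  obtain ⟨U, V, hUV⟩ := exists_eq_factors_add_X_pow_mul hFP hFQ (by simpa [hP, hQ] using hba)
  refine ⟨P, Q, U, V, ⟨hPdeg, hP⟩, ⟨hQdeg, hQ⟩, ?_, hUV⟩
  have hmap : (X - C a) * (X - C b) * U.map constantCoeff = (X - C a) * (X - C b) * u := by
    rw [← hF, hUV]
    simp [hP, hQ]
  exact ((monic_X_sub_C a).mul (monic_X_sub_C b)).isRegular.left hmap

/-- The polynomial `ε⁻² h(ε, εη)` attached to `h(ε, ξ) = ξ² + ∑_{p=2}^N ε^p T_p(ξ)`. The inner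
variable `X` is `ε` and the outer variable `Y` is `η`. -/
noncomputable def rescaledSymbol (N : ℕ) (T : ℕ → R[X]) : R[X][Y] :=
  Y ^ 2 + ∑ p ∈ Finset.Icc 2 N, C (X ^ (p - 2)) * ((T p).map C).comp (C X * Y)

lemma evalEval_rescaledSymbol (N : ℕ) (T : ℕ → R[X]) (ε η : R) :
    (rescaledSymbol N T).evalEval ε η =
      η ^ 2 + ∑ p ∈ Finset.Icc 2 N, ε ^ (p - 2) * (T p).eval (ε * η) := by
  have hcomp : ∀ S : R[X], (((S.map C).comp (C X * Y)).eval (C η)).eval ε = S.eval (ε * η) := by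
    intro S
    rw [eval_comp, eval_map, ← comp, eval_comp]
    simp [mul_comm ε η]
  simp only [rescaledSymbol, evalEval, eval_add, eval_pow, eval_X, eval_C, eval_finsetSum,
    eval_mul, hcomp]

lemma map_constantCoeff_rescaledSymbol {N : ℕ} (hN : 2 ≤ N) (T : ℕ → R[X]) :
    (rescaledSymbol N T).map constantCoeff = X ^ 2 + C ((T 2).eval 0) := by
  have hvanish : ∀ p ∈ Finset.Icc 2 N, p ≠ 2 →
      (C (X ^ (p - 2)) * ((T p).map C).comp (C X * Y)).map (constantCoeff (R := R)) = 0 := by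
    intro p hp hne
    have hpos : p - 2 ≠ 0 := by have := (Finset.mem_Icc.mp hp).1; omega
    simp [hpos]
  rw [rescaledSymbol, Polynomial.map_add, Polynomial.map_sum,
    Finset.sum_eq_single_of_mem 2 (by simpa using hN) hvanish]
  simp [map_map, Polynomial.map_comp]

end Algebra

section Measure

open Set

lemma abs_volume_real_sub_le_of_quadratic_sandwich {S : Set ℝ} {a b κ : ℝ} (hba : b < a)
    (hκ : 0 ≤ κ) (hlower : {y | (y - a) * (y - b) < -κ} ⊆ S)
    (hupper : S ⊆ {y | (y - a) * (y - b) ≤ κ}) :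
    |volume.real S - (a - b)| ≤ 4 * κ / (a - b) := by
  have hab : 0 < a - b := sub_pos.mpr hba
  obtain ⟨t, rfl⟩ : ∃ t, κ = t * (a - b) := ⟨κ / (a - b), by field_simp⟩
  have ht : 0 ≤ t := nonneg_of_mul_nonneg_left hκ hab
  have hinner : Ioo (b + 2 * t) (a - 2 * t) ⊆ S := by
    rintro y ⟨hby, hya⟩
    apply hlower
    change (y - a) * (y - b) < -(t * (a - b))
    -- the nearer root is at distance more than `2 * t`, the farther one at least `(a - b) / 2`
    rcases le_total (a - y) (y - b) with hnear | hnear <;> nlinarith [hnear]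
  have houter : S ⊆ Icc (b - t) (a + t) := by
    intro y hy
    have hyκ : (y - a) * (y - b) ≤ t * (a - b) := hupper hy
    constructor <;> by_contra! hlt <;> nlinarith
  have hge := measureReal_mono (μ := volume) hinner
    (measure_ne_top_of_subset houter measure_Icc_lt_top.ne)
  have hle := measureReal_mono (μ := volume) houter measure_Icc_lt_top.ne
  rw [Real.volume_real_Ioo] at hge
  rw [Real.volume_real_Icc_of_le (by linarith)] at hle
  rw [mul_div_assoc, mul_div_cancel_right₀ t hab.ne', abs_le]
  exact ⟨by linarith [(le_max_left _ _).trans hge], by linarith⟩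

lemma abs_volume_real_sep_mul_add_neg_sub_le {a b l v m κ : ℝ} {w e : ℝ → ℝ} (hlb : l ≤ b)
    (hba : b < a) (hav : a ≤ v) (hm : 0 < m) (hw : ∀ y ∈ Icc l v, m ≤ w y)
    (he : ∀ y ∈ Icc l v, |e y| ≤ κ * m) :
    |volume.real {y ∈ Icc l v | (y - a) * (y - b) * w y + e y < 0} - (a - b)| ≤
      4 * κ / (a - b) := by
  have hκ : 0 ≤ κ := nonneg_of_mul_nonneg_left
    ((abs_nonneg _).trans (he a ⟨hlb.trans hba.le, hav⟩)) hm
  refine abs_volume_real_sub_le_of_quadratic_sandwich hba hκ ?_ ?_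
  · intro y hy
    have hneg : (y - a) * (y - b) < -κ := hy
    have hyI : y ∈ Icc l v := ⟨by nlinarith, by nlinarith⟩
    have hmul : (y - a) * (y - b) * w y ≤ (y - a) * (y - b) * m :=
      mul_le_mul_of_nonpos_left (hw y hyI) (by linarith)
    refine ⟨hyI, ?_⟩
    nlinarith [le_of_abs_le (he y hyI)]
  · rintro y ⟨hyI, hy⟩
    change (y - a) * (y - b) ≤ κ
    by_contra! hlt
    have hmul : (y - a) * (y - b) * m ≤ (y - a) * (y - b) * w y :=
      mul_le_mul_of_nonneg_left (hw y hyI) (hκ.trans hlt.le)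
    nlinarith [neg_le_of_abs_le (he y hyI)]

end Measure

section Asymptotics

open Polynomial Polynomial.Bivariate Set Filter Topology

lemma continuous_evalEval (F : ℝ[X][Y]) : Continuous fun z : ℝ × ℝ ↦ F.evalEval z.1 z.2 := by
  have heval : ∀ z : ℝ × ℝ,
      F.evalEval z.1 z.2 = ∑ i ∈ F.support, (F.coeff i).eval z.1 * z.2 ^ i := by
    intro z
    simp [evalEval, eval_eq_sum (p := F), Polynomial.sum, eval_finsetSum]
  simp only [heval]
  fun_prop

lemma eventually_forall_mem_lt_of_continuous {g : ℝ × ℝ → ℝ} (hg : Continuous g) {K : Set ℝ}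
    (hK : IsCompact K) {x₀ D : ℝ} (hD : ∀ y ∈ K, g (x₀, y) < D) :
    ∀ᶠ x in 𝓝 x₀, ∀ y ∈ K, g (x, y) < D :=
  hK.eventually_forall_of_forall_eventually fun y hy ↦
    (hg.tendsto (x₀, y)).eventually_lt_const (hD y hy)

lemma exists_eventually_abs_evalEval_le (F : ℝ[X][Y]) {K : Set ℝ} (hK : IsCompact K) (x₀ : ℝ) :
    ∃ D, ∀ᶠ x in 𝓝 x₀, ∀ y ∈ K, |F.evalEval x y| ≤ D := by
  have hcont : Continuous fun z : ℝ × ℝ ↦ |F.evalEval z.1 z.2| := (continuous_evalEval F).abs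
  obtain ⟨D, hD⟩ := (hK.image (hcont.comp (Continuous.prodMk_right x₀))).bddAbove
  refine ⟨D + 1, (eventually_forall_mem_lt_of_continuous hcont hK fun y hy ↦ ?_).mono
    fun x hx y hy ↦ (hx y hy).le⟩
  exact (hD (mem_image_of_mem _ hy)).trans_lt (lt_add_one D)

lemma exists_pos_eventually_le_evalEval {F : ℝ[X][Y]} {K : Set ℝ} (hK : IsCompact K) {x₀ : ℝ}
    (hF : ∀ y ∈ K, 0 < F.evalEval x₀ y) :
    ∃ m > 0, ∀ᶠ x in 𝓝 x₀, ∀ y ∈ K, m ≤ F.evalEval x y := by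
  have hcont := continuous_evalEval F
  obtain ⟨m, hm, hmF⟩ := hK.exists_forall_le'
    (hcont.comp (Continuous.prodMk_right x₀)).continuousOn hF
  refine ⟨m / 2, half_pos hm, ?_⟩
  refine (eventually_forall_mem_lt_of_continuous hcont.neg hK (D := -(m / 2)) fun y hy ↦ ?_).mono
    fun x hx y hy ↦ (neg_lt_neg_iff.mp (hx y hy)).le
  exact neg_lt_neg ((half_lt_self hm).trans_le (hmF y hy))

lemma tendsto_eval_nhds_zero (P : ℝ[X]) : Tendsto P.eval (𝓝 0) (𝓝 (P.coeff 0)) :=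
  P.coeff_zero_eq_eval_zero ▸ P.continuous.tendsto 0

lemma abs_volume_real_sep_evalEval_add_neg_sub_le {P Q : ℝ[X]} {U V : ℝ[X][Y]} {k : ℕ}
    {l v m D K ε : ℝ} {ρ : ℝ → ℝ} (hε : 0 < ε) (hQ : l ≤ Q.eval ε) (hQP : Q.eval ε < P.eval ε)
    (hP : P.eval ε ≤ v) (hm : 0 < m) (hU : ∀ y ∈ Icc l v, m ≤ U.evalEval ε y)
    (hV : ∀ y ∈ Icc l v, |V.evalEval ε y| ≤ D) (hρ : ∀ y ∈ Icc l v, |ρ y| ≤ K * ε ^ k) :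
    |volume.real {y ∈ Icc l v |
        ((X - C P) * (X - C Q) * U + C (X ^ k) * V).evalEval ε y + ρ y < 0} - (P - Q).eval ε| ≤
      4 * ((D + K) / m * ε ^ k) / (P - Q).eval ε := by
  have herror : ∀ y ∈ Icc l v,
      |ε ^ k * V.evalEval ε y + ρ y| ≤ (D + K) / m * ε ^ k * m := fun y hy ↦
    calc |ε ^ k * V.evalEval ε y + ρ y|
        ≤ ε ^ k * |V.evalEval ε y| + |ρ y| := by
          simpa only [abs_mul, abs_of_pos (pow_pos hε k)] using
            abs_add_le (ε ^ k * V.evalEval ε y) (ρ y)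
      _ ≤ ε ^ k * D + K * ε ^ k := by gcongr; exacts [hV y hy, hρ y hy]
      _ = (D + K) / m * ε ^ k * m := by field_simp
  simpa only [evalEval_add, evalEval_mul, evalEval_sub, evalEval_X, evalEval_C, eval_sub,
    eval_pow, eval_X, add_assoc] using
    abs_volume_real_sep_mul_add_neg_sub_le hQ hQP hP hm hU herror

theorem exists_polynomial_abs_volume_real_sep_evalEval_add_neg_sub_le {F : ℝ[X][Y]} {u : ℝ[X]}
    {a b l v : ℝ} (hF : F.map constantCoeff = (X - C a) * (X - C b) * u) (hlb : l < b)
    (hba : b < a) (hav : a < v) (hu : ∀ y ∈ Icc l v, 0 < u.eval y) (n : ℕ) :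
    ∃ A : ℝ[X], A.natDegree ≤ n ∧ A.coeff 0 = a - b ∧ ∀ K, ∃ B, ∀ᶠ ε in 𝓝[>] 0,
      ∀ ρ : ℝ → ℝ, (∀ y ∈ Icc l v, |ρ y| ≤ K * ε ^ (n + 1)) →
        |volume.real {y ∈ Icc l v | F.evalEval ε y + ρ y < 0} - A.eval ε| ≤ B * ε ^ (n + 1) := by
  have hab : 0 < a - b := sub_pos.mpr hba
  obtain ⟨P, Q, U, V, ⟨hPdeg, hP⟩, ⟨hQdeg, hQ⟩, hU, rfl⟩ := exists_lift_factors_X_pow hF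
    hab.ne'.isUnit (hu a ⟨(hlb.trans hba).le, hav.le⟩).ne'.isUnit
    (hu b ⟨hlb.le, (hba.trans hav).le⟩).ne'.isUnit n
  obtain ⟨m, hm, hUm⟩ := exists_pos_eventually_le_evalEval (F := U) (x₀ := 0) isCompact_Icc
    (by simpa only [evalEval_zero_left, hU] using hu)
  obtain ⟨D, hVD⟩ := exists_eventually_abs_evalEval_le V (isCompact_Icc (a := l) (b := v)) 0
  have hgap : (P - Q).coeff 0 = a - b := by rw [coeff_sub, hP, hQ]
  have hhalf : (a - b) / 2 < (P - Q).coeff 0 := by rw [hgap]; exact half_lt_self hab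
  refine ⟨P - Q, (natDegree_sub_le_of_le hPdeg hQdeg).trans_eq (max_self n), hgap,
    fun K ↦ ⟨4 * ((D + K) / m) / ((a - b) / 2), ?_⟩⟩
  filter_upwards [self_mem_nhdsWithin, nhdsWithin_le_nhds hUm, nhdsWithin_le_nhds hVD,
    nhdsWithin_le_nhds ((tendsto_eval_nhds_zero Q).eventually_const_lt (hQ ▸ hlb)),
    nhdsWithin_le_nhds ((tendsto_eval_nhds_zero P).eventually_lt_const (hP ▸ hav)),
    nhdsWithin_le_nhds ((tendsto_eval_nhds_zero (P - Q)).eventually_const_lt hhalf)]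
    with ε (hε : 0 < ε) hUε hVε hQε hPε hgapε ρ hρ
  have hQP : Q.eval ε < P.eval ε := by rw [eval_sub] at hgapε; linarith
  have hmem : P.eval ε ∈ Icc l v := ⟨(hQε.trans hQP).le, hPε.le⟩
  have hDK : 0 ≤ (D + K) / m * ε ^ (n + 1) := by
    have hD : 0 ≤ D := (abs_nonneg _).trans (hVε _ hmem)
    have hK : 0 ≤ K := nonneg_of_mul_nonneg_left ((abs_nonneg _).trans (hρ _ hmem)) (by positivity)
    positivity
  calc |volume.real {y ∈ Icc l v | _ + ρ y < 0} - (P - Q).eval ε|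
      ≤ 4 * ((D + K) / m * ε ^ (n + 1)) / (P - Q).eval ε :=
        abs_volume_real_sep_evalEval_add_neg_sub_le hε hQε.le hQP hPε.le hm hUε hVε hρ
    _ ≤ 4 * ((D + K) / m * ε ^ (n + 1)) / ((a - b) / 2) := by gcongr
    _ = 4 * ((D + K) / m) / ((a - b) / 2) * ε ^ (n + 1) := by ring

end Asymptotics

section Symbol

open Polynomial Polynomial.Bivariate Set Filter Topology Asymptotics

/-- The symbol `ξ² + ∑_{p=2}^N ε^p f_p(ξ)` of the almost-diagonal operator, up to its remainder
`O(ε^{N+1})`. -/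
def diagonalSymbol (N : ℕ) (f : ℕ → ℝ → ℝ) (ε ξ : ℝ) : ℝ :=
  ξ ^ 2 + ∑ p ∈ Finset.Icc 2 N, ε ^ p * f p ξ

lemma diagonalSymbol_eval_mul (N : ℕ) (T : ℕ → ℝ[X]) (ε η : ℝ) :
    diagonalSymbol N (fun p ↦ (T p).eval) ε (ε * η) =
      ε ^ 2 * (rescaledSymbol N T).evalEval ε η := by
  rw [diagonalSymbol, evalEval_rescaledSymbol, mul_add, ← mul_pow, Finset.mul_sum]
  congr 1
  refine Finset.sum_congr rfl fun p hp ↦ ?_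
  rw [← mul_assoc, pow_mul_pow_sub ε (Finset.mem_Icc.mp hp).1]

lemma exists_abs_le_mul_of_diagonalSymbol_lt_sq {N : ℕ} {f : ℕ → ℝ → ℝ}
    (hf : ∀ p ∈ Finset.Icc 2 N, BddBelow (range (f p))) :
    ∃ M, ∀ ε ∈ Ioc (0 : ℝ) 1, ∀ ξ, diagonalSymbol N f ε ξ < ε ^ 2 → |ξ| ≤ M * ε := by
  choose! b hb using hf
  set B := ∑ p ∈ Finset.Icc 2 N, |b p|
  have hB : 0 ≤ B := Finset.sum_nonneg fun p _ ↦ abs_nonneg (b p)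
  refine ⟨B + 1, fun ε ⟨hε, hε1⟩ ξ hξ ↦ abs_le_of_sq_le_sq ?_ (by positivity)⟩
  have hlower : -(ε ^ 2 * B) ≤ ∑ p ∈ Finset.Icc 2 N, ε ^ p * f p ξ := by
    rw [Finset.mul_sum, ← Finset.sum_neg_distrib]
    refine Finset.sum_le_sum fun p hp ↦ ?_
    calc -(ε ^ 2 * |b p|) ≤ -(ε ^ p * |b p|) := by
          have hpow : ε ^ p ≤ ε ^ 2 := pow_le_pow_of_le_one hε.le hε1 (Finset.mem_Icc.mp hp).1
          gcongr
      _ ≤ ε ^ p * b p := by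
          rw [← mul_neg]; gcongr; exact neg_abs_le (b p)
      _ ≤ ε ^ p * f p ξ := by gcongr; exact hb p hp (mem_range_self ξ)
  rw [diagonalSymbol] at hξ
  calc ξ ^ 2 ≤ ε ^ 2 * (B + 1) := by linarith
    _ ≤ ε ^ 2 * (B + 1) ^ 2 := by gcongr; nlinarith
    _ = ((B + 1) * ε) ^ 2 := by ring

lemma exists_eventually_abs_comp_mul_le {g : ℝ → ℝ} {k : ℕ} (hg : g =O[𝓝 0] fun x ↦ x ^ k)
    (M : ℝ) : ∃ K, ∀ᶠ ε in 𝓝[>] 0, ∀ η ∈ Icc (-M) M, |g (ε * η)| ≤ K * ε ^ k := by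
  obtain ⟨c, hc, hcg⟩ := hg.exists_pos
  have huniform : ∀ᶠ ε in 𝓝 0, ∀ η ∈ Icc (-M) M, ‖g (ε * η)‖ ≤ c * ‖(ε * η) ^ k‖ := by
    refine isCompact_Icc.eventually_forall_of_forall_eventually fun η _ ↦ ?_
    have hmul : Tendsto (fun z : ℝ × ℝ ↦ z.1 * z.2) (𝓝 (0, η)) (𝓝 0) := by
      simpa only [zero_mul] using (continuous_mul (M := ℝ)).tendsto (0, η)
    exact hmul.eventually hcg.bound
  refine ⟨c * M ^ k, ?_⟩
  filter_upwards [self_mem_nhdsWithin, nhdsWithin_le_nhds huniform] with ε (hε : 0 < ε) hgε η hη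
  calc |g (ε * η)| ≤ c * (ε * |η|) ^ k := by
        simpa only [Real.norm_eq_abs, abs_pow, abs_mul, abs_of_pos hε] using hgε η hη
    _ ≤ c * (ε * M) ^ k := by gcongr; exact abs_le.mpr hη
    _ = c * M ^ k * ε ^ k := by rw [mul_pow]; ring

lemma exists_eventually_abs_diagonalSymbol_sub_le {N : ℕ} {f g : ℕ → ℝ → ℝ}
    (hfg : ∀ p ∈ Finset.Icc 2 N, (fun x ↦ f p x - g p x) =O[𝓝 0] fun x ↦ x ^ (N + 1 - p))
    (M : ℝ) : ∃ K, ∀ᶠ ε in 𝓝[>] 0, ∀ η ∈ Icc (-M) M,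
      |diagonalSymbol N f ε (ε * η) - diagonalSymbol N g ε (ε * η)| ≤ K * ε ^ (N + 1) := by
  choose! K hK using fun p hp ↦ exists_eventually_abs_comp_mul_le (hfg p hp) M
  refine ⟨∑ p ∈ Finset.Icc 2 N, K p, ?_⟩
  filter_upwards [self_mem_nhdsWithin, (Filter.eventually_all_finset _).mpr hK]
    with ε (hε : 0 < ε) hKε η hη
  rw [diagonalSymbol, diagonalSymbol, add_sub_add_left_eq_sub, ← Finset.sum_sub_distrib,
    Finset.sum_mul]
  refine (Finset.abs_sum_le_sum_abs _ _).trans (Finset.sum_le_sum fun p hp ↦ ?_)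
  calc |ε ^ p * f p (ε * η) - ε ^ p * g p (ε * η)|
      = ε ^ p * |f p (ε * η) - g p (ε * η)| := by
        rw [← mul_sub, abs_mul, abs_of_pos (pow_pos hε p)]
    _ ≤ ε ^ p * (K p * ε ^ (N + 1 - p)) := by gcongr; exact hKε p hp η hη
    _ = K p * ε ^ (N + 1) := by
        rw [mul_left_comm, pow_mul_pow_sub ε ((Finset.mem_Icc.mp hp).2.trans N.le_succ)]

lemma volume_real_eq_mul_preimage_mul_left {c : ℝ} (hc : 0 < c) (s : Set ℝ) :
    volume.real s = c * volume.real ((c * ·) ⁻¹' s) := by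
  rw [measureReal_def, measureReal_def, Real.volume_preimage_mul_left hc.ne', ENNReal.toReal_mul,
    ENNReal.toReal_ofReal (abs_nonneg _), abs_of_pos (inv_pos.mpr hc), mul_inv_cancel_left₀ hc.ne']

lemma volume_real_setOf_diagonalSymbol_add_neg {N : ℕ} {f : ℕ → ℝ → ℝ} {ε M : ℝ} {r : ℝ → ℝ}
    (hε : 0 < ε) (hM : ∀ ξ, diagonalSymbol N f ε ξ + r ξ < 0 → |ξ| ≤ M * ε) (T : ℕ → ℝ[X]) :
    volume.real {ξ | diagonalSymbol N f ε ξ + r ξ < 0} =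
      ε * volume.real {η ∈ Icc (-M) M | (rescaledSymbol N T).evalEval ε η +
        (diagonalSymbol N f ε (ε * η) - diagonalSymbol N (fun p ↦ (T p).eval) ε (ε * η) +
          r (ε * η)) / ε ^ 2 < 0} := by
  rw [volume_real_eq_mul_preimage_mul_left hε]
  congr 2
  ext η
  have hsymbol : (rescaledSymbol N T).evalEval ε η +
      (diagonalSymbol N f ε (ε * η) - diagonalSymbol N (fun p ↦ (T p).eval) ε (ε * η) +
        r (ε * η)) / ε ^ 2 = (diagonalSymbol N f ε (ε * η) + r (ε * η)) / ε ^ 2 := by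
    rw [diagonalSymbol_eval_mul]
    field_simp
    ring
  rw [mem_ofPred_eq, hsymbol, div_lt_iff₀ (pow_pos hε 2), zero_mul, mem_preimage, mem_ofPred_eq]
  refine ⟨fun hη ↦ ⟨abs_le.mp ?_, hη⟩, And.right⟩
  have hξ : |ε * η| ≤ M * ε := hM _ hη
  rwa [abs_mul, abs_of_pos hε, mul_comm, mul_le_mul_iff_left₀ hε] at hξ

lemma eval_zero_eq_of_sub_isBigO_pow {f : ℝ → ℝ} {T : ℝ[X]} {k : ℕ} (hk : k ≠ 0)
    (hT : (fun x ↦ f x - T.eval x) =O[𝓝 0] fun x ↦ x ^ k) : T.eval 0 = f 0 :=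
  (sub_eq_zero.mp (hT.eq_zero_imp.self_of_nhds (zero_pow hk))).symm

theorem exists_polynomial_abs_volume_real_setOf_diagonalSymbol_sub_le {m : ℕ} {f : ℕ → ℝ → ℝ}
    {T : ℕ → ℝ[X]} (hbdd : ∀ p ∈ Finset.Icc 2 (m + 2), BddBelow (range (f p)))
    (hT : ∀ p ∈ Finset.Icc 2 (m + 2),
      (fun x ↦ f p x - (T p).eval x) =O[𝓝 0] fun x ↦ x ^ (m + 3 - p)) (hf2 : f 2 0 < 0) :
    ∃ A : ℝ[X], A.natDegree ≤ m ∧ A.coeff 0 = 2 * √(-(f 2 0)) ∧ ∃ B, ∀ᶠ ε in 𝓝[>] 0,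
      ∀ r : ℝ → ℝ, (∀ ξ, |r ξ| ≤ ε ^ (m + 3)) →
        |volume.real {ξ | diagonalSymbol (m + 2) f ε ξ + r ξ < 0} - ε * A.eval ε| ≤
          B * ε ^ (m + 2) := by
  set c := √(-(f 2 0))
  have hc : 0 < c := Real.sqrt_pos.mpr (neg_pos.mpr hf2)
  have hT2 : (T 2).eval 0 = -c ^ 2 := by
    rw [Real.sq_sqrt (neg_pos.mpr hf2).le, neg_neg]
    exact eval_zero_eq_of_sub_isBigO_pow (by omega) (hT 2 (by simp))
  have hF : (rescaledSymbol (m + 2) T).map constantCoeff = (X - C c) * (X - C (-c)) * 1 := by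
    rw [map_constantCoeff_rescaledSymbol (by omega), hT2, C_neg, C_neg, C_pow]
    ring
  obtain ⟨M₀, hM₀⟩ := exists_abs_le_mul_of_diagonalSymbol_lt_sq hbdd
  set M := max M₀ (c + 1)
  have hcM : c < M := (lt_add_one c).trans_le (le_max_right _ _)
  obtain ⟨A, hAdeg, hA0, hA⟩ := exists_polynomial_abs_volume_real_sep_evalEval_add_neg_sub_le hF
    (neg_lt_neg hcM) (neg_lt_self hc) hcM (by simp) m
  obtain ⟨K, hK⟩ := exists_eventually_abs_diagonalSymbol_sub_le hT M
  obtain ⟨B, hB⟩ := hA (K + 1)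
  refine ⟨A, hAdeg, by rw [hA0]; ring, B, ?_⟩
  filter_upwards [Ioc_mem_nhdsGT one_pos, hK, hB] with ε hε hKε hBε r hr
  have hconfined : ∀ ξ, diagonalSymbol (m + 2) f ε ξ + r ξ < 0 → |ξ| ≤ M * ε := by
    intro ξ hξ
    have hpow : ε ^ (m + 3) ≤ ε ^ 2 := pow_le_pow_of_le_one hε.1.le hε.2 (by omega)
    calc |ξ| ≤ M₀ * ε := hM₀ ε hε ξ (by linarith [neg_le_of_abs_le (hr ξ)])
      _ ≤ M * ε := mul_le_mul_of_nonneg_right (le_max_left _ _) hε.1.le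
  rw [volume_real_setOf_diagonalSymbol_add_neg hε.1 hconfined T, ← mul_sub, abs_mul,
    abs_of_pos hε.1]
  calc ε * |_| ≤ ε * (B * ε ^ (m + 1)) := by
        refine mul_le_mul_of_nonneg_left (hBε _ fun η hη ↦ ?_) hε.1.le
        rw [abs_div, abs_of_pos (pow_pos hε.1 2), div_le_iff₀ (pow_pos hε.1 2)]
        refine (abs_add_le _ _).trans ?_
        linear_combination hKε η hη + hr (ε * η)
    _ = B * ε ^ (m + 2) := by ring

lemma exists_polynomial_sub_isLittleO_pow {f : ℝ → ℝ} {n : ℕ} (hf : ContDiff ℝ n f) (x₀ : ℝ) :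
    ∃ T : ℝ[X], (fun x ↦ f x - T.eval x) =o[𝓝 x₀] fun x ↦ (x - x₀) ^ n := by
  refine ⟨∑ k ∈ Finset.range (n + 1),
    C ((k.factorial : ℝ)⁻¹ * iteratedDerivWithin k f univ x₀) * (X - C x₀) ^ k, ?_⟩
  refine (taylor_isLittleO_univ hf).congr_left fun x ↦ ?_
  rw [taylor_within_apply, eval_finsetSum]
  refine congrArg (f x - ·) (Finset.sum_congr rfl fun k _ ↦ ?_)
  simp only [eval_mul, eval_C, eval_pow, eval_sub, eval_X, smul_eq_mul]
  ring

lemma exists_polynomial_sub_isBigO_pow {f : ℝ → ℝ} {n : ℕ} (hf : ContDiff ℝ n f) :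
    ∃ T : ℝ[X], (fun x ↦ f x - T.eval x) =O[𝓝 0] fun x ↦ x ^ n := by
  obtain ⟨T, hT⟩ := exists_polynomial_sub_isLittleO_pow hf 0
  exact ⟨T, by simpa only [sub_zero] using hT.isBigO⟩

lemma bddBelow_range_of_exists_abs_le {α : Type*} {f : α → ℝ} (hf : ∃ B, ∀ x, |f x| ≤ B) :
    BddBelow (range f) :=
  hf.imp' Neg.neg fun _ hB ↦ forall_mem_range.mpr fun x ↦ neg_le_of_abs_le (hB x)

end Symbol

open Polynomial Asymptotics Filter Topology in
theorem stmt_14_general (N : ℕ) (hN : 2 ≤ N) (f : ℕ → ℝ → ℝ)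
    (hf : ∀ p, 2 ≤ p → p ≤ N →
      ∃ T : ℝ[X], (fun ξ ↦ f p ξ - T.eval ξ) =O[𝓝 0] fun ξ ↦ ξ ^ (N + 1 - p))
    (hfb : ∀ p, 2 ≤ p → p ≤ N → BddBelow (Set.range (f p)))
    (hf2 : f 2 0 < 0) :
    ∃ a : ℕ → ℝ, ∃ C : ℝ, 0 < C ∧ ∃ ε₁ : ℝ, 0 < ε₁ ∧
      ∀ ε : ℝ, ε ∈ Set.Ioo 0 ε₁ →
      ∀ r : ℝ → ℝ, (∀ ξ : ℝ, |r ξ| ≤ ε ^ (N + 1)) →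
        |(volume {ξ : ℝ |
            ξ ^ 2 + ∑ p ∈ Finset.Icc 2 N, ε ^ p * f p ξ + r ξ < 0}).toReal -
          ε * (2 * Real.sqrt (-(f 2 0)) + ∑ p ∈ Finset.Icc 1 (N - 2), a p * ε ^ p)| ≤
          C * ε ^ N := by
  obtain ⟨m, rfl⟩ := Nat.exists_eq_add_of_le' hN
  choose! T hT using hf
  obtain ⟨A, hAdeg, hA0, B, hB⟩ := exists_polynomial_abs_volume_real_setOf_diagonalSymbol_sub_le
    (fun p hp ↦ hfb p (Finset.mem_Icc.mp hp).1 (Finset.mem_Icc.mp hp).2)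
    (fun p hp ↦ hT p (Finset.mem_Icc.mp hp).1 (Finset.mem_Icc.mp hp).2) hf2
  obtain ⟨ε₁, hε₁, hBε⟩ := mem_nhdsGT_iff_exists_Ioo_subset.mp hB
  refine ⟨A.coeff, max B 1, by positivity, ε₁, hε₁, fun ε hε r hr ↦ ?_⟩
  have hexp := hBε hε r hr
  rw [eval_eq_coeff_zero_add_sum hAdeg, hA0] at hexp
  exact hexp.trans (mul_le_mul_of_nonneg_right (le_max_left B 1) (pow_nonneg hε.1.le _))

/-- Expansion of the integrated density of states at the bottom of the spectrum when the
mean value vanishes and `f₂(0) < 0`: the measure of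
`{ξ : ξ² + Σ_{p=2}^N ε^p f_p(ξ) + r(ξ) < 0}` equals
`ε(2(−f₂(0))^{1/2} + Σ_{p=1}^{N−2} a_p ε^p)` up to an error `C ε^N`, uniformly over
perturbations `r` bounded by `ε^{N+1}`. -/
theorem stmt_14 (N : ℕ) (hN : 2 ≤ N)
    (f : ℕ → ℝ → ℝ)
    (hf : ∀ p : ℕ, 2 ≤ p → p ≤ N → ContDiff ℝ (⊤ : ℕ∞) (f p))
    (hfb : ∀ p : ℕ, 2 ≤ p → p ≤ N → ∀ k : ℕ, ∃ B : ℝ,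
      ∀ ξ : ℝ, |iteratedDeriv k (f p) ξ| ≤ B)
    (hf2 : f 2 0 < 0) :
    ∃ a : ℕ → ℝ, ∃ C : ℝ, 0 < C ∧ ∃ ε₁ : ℝ, 0 < ε₁ ∧
      ∀ ε : ℝ, ε ∈ Set.Ioo 0 ε₁ →
      ∀ r : ℝ → ℝ, Measurable r → (∀ ξ : ℝ, |r ξ| ≤ ε ^ (N + 1)) →
        |(volume {ξ : ℝ |
            ξ ^ 2 + ∑ p ∈ Finset.Icc 2 N, ε ^ p * f p ξ + r ξ < 0}).toReal -
          ε * (2 * Real.sqrt (-(f 2 0)) + ∑ p ∈ Finset.Icc 1 (N - 2), a p * ε ^ p)| ≤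
          C * ε ^ N := by
  obtain ⟨a, C, hC, ε₁, hε₁, h⟩ := stmt_14_general N hN f
    (fun p h2 hpN ↦ exists_polynomial_sub_isBigO_pow (contDiff_infty.mp (hf p h2 hpN) _))
    (fun p h2 hpN ↦ bddBelow_range_of_exists_abs_le
      (by simpa only [iteratedDeriv_zero] using hfb p h2 hpN 0)) hf2
  exact ⟨a, C, hC, ε₁, hε₁, fun ε hε r _ ↦ h ε hε r⟩
end
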